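/- arXiv:1302.0517 — 2 statements merged into one kernel-verified Lean document; each statement's English description precedes it below -/
import Mathlib

section
/- Let γ denote the Euler–Mascheroni constant and D = e^{1-γ/2}/√2. For every integer n ≥ 2, every positive integer N, and every n-linear form U : (ℝ^N)^n → ℝ, one has (∑_{i₁,…,iₙ=1}^N |U(e_{i₁},…,e_{iₙ})|^{2n/(n+1)})^{(n+1)/(2n)} ≤ √2 · (n-1)^{log₂ D} · ‖U‖. -/
/-!
Blei's inequality bounds the `ℓ^{2(n+1)/(n+2)}` norm of the coefficients of an `(n+1)`-linear form
by mixed `(ℓ^{2n/(n+1)}, ℓ²)` norms. Khinchin's inequality with exponent `p = 2n/(n+1)` replaces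
each inner `ℓ²` sum by an average over signs, and freezing the signs leaves an `n`-linear form of
norm at most `‖U‖`. Each step of this induction on `n` thus costs one Khinchin constant: `√2` for
`n = 1`, and at most `(8/3)^{1/(2n)} ≤ e^{1/(2n)} ≤ √(n/(n-1))` afterwards. The product telescopes
to `√2 · √(n-1)`, and `log₂ D ≥ 1/2`.

The Khinchin constants come from interpolating the second moment of a Rademacher sum between the
`p`-th and the third. All the moment bounds follow from a discrete form of Gaussian integration by
parts.
-/

open Real

/-- The Bohnenblust--Hille quantity of an `n`-linear form on `ℓ_∞^N` over `ℝ`: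
`(∑_{i₁,…,iₙ} |U(e_{i₁},…,e_{iₙ})|^{2n/(n+1)})^{(n+1)/(2n)}`. -/
noncomputable def BHreal (n N : ℕ)
    (U : ContinuousMultilinearMap ℝ (fun _ : Fin n => (Fin N → ℝ)) ℝ) : ℝ :=
  (∑ i : Fin n → Fin N,
      |U (fun k => Pi.single (i k) (1 : ℝ))| ^ ((2 * n : ℝ) / (n + 1)))
    ^ ((n + 1 : ℝ) / (2 * n))

open scoped BigOperators NNReal ENNReal

section Moments

variable {α : Type*} [Fintype α]

theorem sq_expect_mul_sub_le [Nonempty α] (f g : α → ℝ) :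
    (𝔼 x, f x * g x - (𝔼 x, f x) * 𝔼 x, g x) ^ 2 ≤
      (𝔼 x, f x ^ 2 - (𝔼 x, f x) ^ 2) * (𝔼 x, g x ^ 2 - (𝔼 x, g x) ^ 2) := by
  have expect_centered_mul (u v : α → ℝ) :
      𝔼 x, (u x - 𝔼 y, u y) * (v x - 𝔼 y, v y) = 𝔼 x, u x * v x - (𝔼 x, u x) * 𝔼 x, v x := by
    simp only [sub_mul, mul_sub, Finset.expect_sub_distrib, ← Finset.mul_expect,
      ← Finset.expect_mul, Fintype.expect_const]
    ring
  calc (𝔼 x, f x * g x - (𝔼 x, f x) * 𝔼 x, g x) ^ 2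
      = (𝔼 x, (f x - 𝔼 y, f y) * (g x - 𝔼 y, g y)) ^ 2 := by rw [expect_centered_mul]
    _ ≤ (𝔼 x, (f x - 𝔼 y, f y) ^ 2) * 𝔼 x, (g x - 𝔼 y, g y) ^ 2 :=
        Finset.expect_mul_sq_le_sq_mul_sq _ _ _
    _ = (𝔼 x, f x ^ 2 - (𝔼 x, f x) ^ 2) * (𝔼 x, g x ^ 2 - (𝔼 x, g x) ^ 2) := by
        simp only [pow_two, expect_centered_mul]

theorem expect_sq_rpow_le_expect_cube_mul {y : α → ℝ} (hy : ∀ x, 0 ≤ y x) {p : ℝ} (hp : 0 < p)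
    (hp2 : p ≤ 2) :
    (𝔼 x, y x ^ 2) ^ (3 - p) ≤ (𝔼 x, y x ^ 3) ^ (2 - p) * 𝔼 x, y x ^ p := by
  have holder := Real.compact_inner_le_weight_mul_Lp_of_nonneg Finset.univ
    (by linarith : 1 ≤ 3 - p) (fun x ↦ pow_nonneg (hy x) 3) (fun x ↦ inv_nonneg.2 (hy x))
  have cube_mul_inv (x) : y x ^ 3 * (y x)⁻¹ = y x ^ 2 := by
    rcases eq_or_ne (y x) 0 with h | h
    · simp [h]
    · field_simp
  have cube_mul_inv_rpow (x) : y x ^ 3 * (y x)⁻¹ ^ (3 - p) = y x ^ p := by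
    rcases (hy x).eq_or_lt with h | h
    · simp [← h, Real.zero_rpow hp.ne']
    · rw [Real.inv_rpow h.le, ← Real.rpow_neg h.le, ← Real.rpow_natCast, ← Real.rpow_add h]
      congr 1
      push_cast
      ring
  simp only [cube_mul_inv, cube_mul_inv_rpow] at holder
  have h3 : 0 ≤ 𝔼 x, y x ^ 3 := Finset.expect_nonneg fun x _ ↦ pow_nonneg (hy x) 3
  have hp0 : 0 ≤ 𝔼 x, y x ^ p := Finset.expect_nonneg fun x _ ↦ Real.rpow_nonneg (hy x) p
  have h3p : 3 - p ≠ 0 := by linarith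
  calc (𝔼 x, y x ^ 2) ^ (3 - p)
      ≤ ((𝔼 x, y x ^ 3) ^ (1 - (3 - p)⁻¹) * (𝔼 x, y x ^ p) ^ (3 - p)⁻¹) ^ (3 - p) :=
        Real.rpow_le_rpow (Finset.expect_nonneg fun x _ ↦ sq_nonneg _) holder (by linarith)
    _ = (𝔼 x, y x ^ 3) ^ (2 - p) * 𝔼 x, y x ^ p := by
        rw [Real.mul_rpow (by positivity) (by positivity), ← Real.rpow_mul h3,
          Real.rpow_inv_rpow hp0 h3p]
        congr 2
        field_simp
        ring

end Moments

section Rademacher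

variable {ι : Type*} [Fintype ι]

/-- The Rademacher sum `∑ aᵢ εᵢ`, as a function of the signs. A sign vector is encoded as an element
of the group `ι → ℤˣ`, so that averaging over the signs is the finite expectation `𝔼 ε`. -/
def rademacherSum (a : ι → ℝ) (ε : ι → ℤˣ) : ℝ :=
  ∑ i, a i * ((ε i : ℤ) : ℝ)

variable [DecidableEq ι]

theorem rademacherSum_mul_mulSingle_neg_one (a : ι → ℝ) (ε : ι → ℤˣ) (i : ι) :
    rademacherSum a (ε * Pi.mulSingle i (-1)) =
      rademacherSum a ε - 2 * (a i * ((ε i : ℤ) : ℝ)) := by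
  have coord_diff (k : ι) :
      a k * (((ε * Pi.mulSingle i (-1) : ι → ℤˣ) k : ℤ) : ℝ) =
        a k * ((ε k : ℤ) : ℝ) - if k = i then 2 * (a i * ((ε i : ℤ) : ℝ)) else 0 := by
    rcases eq_or_ne k i with rfl | hk
    · rw [Pi.mul_apply, Pi.mulSingle_eq_same, if_pos rfl]
      push_cast
      ring
    · rw [Pi.mul_apply, Pi.mulSingle_eq_of_ne hk, mul_one, if_neg hk, sub_zero]
  simp only [rademacherSum, coord_diff, Finset.sum_sub_distrib, Finset.sum_ite_eq',
    Finset.mem_univ, if_true]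

theorem expect_mul_mulSingle_neg_one (F : (ι → ℤˣ) → ℝ) (i : ι) :
    𝔼 ε : ι → ℤˣ, F (ε * Pi.mulSingle i (-1)) = 𝔼 ε, F ε :=
  Fintype.expect_equiv (Equiv.mulRight (Pi.mulSingle i (-1) : ι → ℤˣ)) _ _ fun _ ↦ rfl

theorem expect_coord_mul_rademacherSum_le (a : ι → ℝ) {f g : ℝ → ℝ}
    (hfg : ∀ u v, (u - v) * (f u - f v) ≤ (u - v) ^ 2 * ((g u + g v) / 2)) (i : ι) :
    𝔼 ε : ι → ℤˣ, a i * ((ε i : ℤ) : ℝ) * f (rademacherSum a ε) ≤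
      a i ^ 2 * 𝔼 ε, g (rademacherSum a ε) := by
  -- Pair each `ε` with its flip at `i`, which changes the sign of `t` and moves `S` by `2t`.
  let flip (ε : ι → ℤˣ) : ι → ℤˣ := ε * Pi.mulSingle i (-1)
  let t (ε : ι → ℤˣ) : ℝ := a i * ((ε i : ℤ) : ℝ)
  let S := rademacherSum a
  have t_flip (ε) : t (flip ε) = -t ε := by simp [t, flip]
  have t_sq (ε) : t ε ^ 2 = a i ^ 2 := by
    rcases Int.units_eq_one_or (ε i) with h | h <;> simp [t, h]
  have pointwise (ε) : t ε * f (S ε) + t (flip ε) * f (S (flip ε)) ≤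
      a i ^ 2 * g (S ε) + a i ^ 2 * g (S (flip ε)) := by
    have h := hfg (S ε) (S (flip ε))
    have hS : S (flip ε) = S ε - 2 * t ε := rademacherSum_mul_mulSingle_neg_one a ε i
    have hd : S ε - S (flip ε) = 2 * t ε := by linarith
    rw [hd, mul_pow, t_sq] at h
    rw [t_flip]
    linarith
  have averaged := Finset.expect_le_expect fun ε (_ : ε ∈ Finset.univ) ↦ pointwise ε
  rw [Finset.expect_add_distrib, Finset.expect_add_distrib,
    expect_mul_mulSingle_neg_one (fun ε ↦ t ε * f (S ε)),
    expect_mul_mulSingle_neg_one (fun ε ↦ a i ^ 2 * g (S ε)), ← Finset.mul_expect] at averaged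
  linarith

theorem expect_rademacherSum_mul_le (a : ι → ℝ) {f g : ℝ → ℝ}
    (hfg : ∀ u v, (u - v) * (f u - f v) ≤ (u - v) ^ 2 * ((g u + g v) / 2)) :
    𝔼 ε, rademacherSum a ε * f (rademacherSum a ε) ≤
      (∑ i, a i ^ 2) * 𝔼 ε, g (rademacherSum a ε) :=
  calc 𝔼 ε, rademacherSum a ε * f (rademacherSum a ε)
      = ∑ i, 𝔼 ε : ι → ℤˣ, a i * ((ε i : ℤ) : ℝ) * f (rademacherSum a ε) := by
        rw [← Finset.expect_sum_comm]
        simp only [← Finset.sum_mul, ← rademacherSum.eq_def]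
    _ ≤ ∑ i, a i ^ 2 * 𝔼 ε, g (rademacherSum a ε) :=
        Finset.sum_le_sum fun i _ ↦ expect_coord_mul_rademacherSum_le a hfg i
    _ = (∑ i, a i ^ 2) * 𝔼 ε, g (rademacherSum a ε) := by rw [Finset.sum_mul]

theorem expect_rademacherSum_sq (a : ι → ℝ) :
    𝔼 ε, rademacherSum a ε ^ 2 = ∑ i, a i ^ 2 := by
  apply le_antisymm
  · simpa [pow_two] using
      expect_rademacherSum_mul_le a (f := id) (g := fun _ ↦ 1) fun u v ↦ by simp [pow_two]
  · simpa [pow_two, Finset.expect_neg_distrib] using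
      expect_rademacherSum_mul_le a (f := fun s ↦ -s) (g := fun _ ↦ -1) fun u v ↦
        le_of_eq (by ring)

theorem expect_abs_rademacherSum_pow_three_le (a : ι → ℝ) :
    𝔼 ε, |rademacherSum a ε| ^ 3 ≤ (∑ i, a i ^ 2) * (2 * 𝔼 ε, |rademacherSum a ε|) := by
  have hfg (u v : ℝ) :
      (u - v) * (u * |u| - v * |v|) ≤ (u - v) ^ 2 * ((2 * |u| + 2 * |v|) / 2) := by
    have gap_nonneg : 0 ≤ (|u| + |v|) * (|u * v| - u * v) :=
      mul_nonneg (by positivity) (sub_nonneg.2 (le_abs_self _))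
    rw [abs_mul] at gap_nonneg
    linear_combination gap_nonneg + |v| * sq_abs u + |u| * sq_abs v
  have abs_cube (s : ℝ) : |s| ^ 3 = s * (s * |s|) := by
    rw [← mul_assoc, ← abs_mul_abs_self]
    ring
  simpa only [abs_cube, Finset.mul_expect] using expect_rademacherSum_mul_le a hfg

theorem expect_rademacherSum_pow_four_le (a : ι → ℝ) :
    𝔼 ε, rademacherSum a ε ^ 4 ≤ 3 * (∑ i, a i ^ 2) ^ 2 := by
  have h := expect_rademacherSum_mul_le a (f := fun s ↦ s ^ 3) (g := fun s ↦ 3 * s ^ 2)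
    fun u v ↦ by nlinarith [sq_nonneg ((u - v) ^ 2)]
  simp only [← pow_succ', ← Finset.mul_expect, expect_rademacherSum_sq] at h
  linarith

theorem sqrt_sum_sq_le_sqrt_two_mul_expect_abs (a : ι → ℝ) :
    √(∑ i, a i ^ 2) ≤ √2 * 𝔼 ε, |rademacherSum a ε| := by
  have cauchy : (∑ i, a i ^ 2) ^ 2 ≤
      (𝔼 ε, |rademacherSum a ε| ^ 3) * 𝔼 ε, |rademacherSum a ε| := by
    have h := expect_sq_rpow_le_expect_cube_mul (fun ε ↦ abs_nonneg (rademacherSum a ε))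
      one_pos one_le_two
    norm_num [expect_rademacherSum_sq] at h
    exact h
  have third := expect_abs_rademacherSum_pow_three_le a
  have hM₁ : 0 ≤ 𝔼 ε, |rademacherSum a ε| := Finset.expect_nonneg fun ε _ ↦ abs_nonneg _
  have hV : 0 ≤ ∑ i, a i ^ 2 := by positivity
  rw [Real.sqrt_le_iff, mul_pow, Real.sq_sqrt zero_le_two]
  refine ⟨by positivity, ?_⟩
  rcases hV.eq_or_lt with hV | hV
  · rw [← hV]
    positivity
  · refine le_of_mul_le_mul_left ?_ hV
    nlinarith [mul_le_mul_of_nonneg_right third hM₁]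

theorem sq_expect_abs_rademacherSum_pow_three_le (a : ι → ℝ) :
    (𝔼 ε, |rademacherSum a ε| ^ 3) ^ 2 ≤ 8 / 3 * (∑ i, a i ^ 2) ^ 3 := by
  have third := expect_abs_rademacherSum_pow_three_le a
  have fourth := expect_rademacherSum_pow_four_le a
  set V := ∑ i, a i ^ 2
  set M₁ := 𝔼 ε, |rademacherSum a ε|
  set M₃ := 𝔼 ε, |rademacherSum a ε| ^ 3
  have variance_nonneg : 0 ≤ V - M₁ ^ 2 := by
    have h := Finset.expect_mul_sq_le_sq_mul_sq Finset.univ (fun _ ↦ 1) fun ε ↦ |rademacherSum a ε|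
    simpa [expect_rademacherSum_sq] using h
  have covariance_le : (M₃ - V * M₁) ^ 2 ≤
      (𝔼 ε, rademacherSum a ε ^ 4 - V ^ 2) * (V - M₁ ^ 2) := by
    have h := sq_expect_mul_sub_le (fun ε ↦ rademacherSum a ε ^ 2) fun ε ↦ |rademacherSum a ε|
    have sq_mul_abs (s : ℝ) : s ^ 2 * |s| = |s| ^ 3 := by rw [← sq_abs, ← pow_succ]
    simpa only [sq_mul_abs, sq_abs, ← pow_mul, expect_rademacherSum_sq] using h
  have quadratic_le : (M₃ - V * M₁) ^ 2 ≤ 2 * V ^ 2 * (V - M₁ ^ 2) :=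
    covariance_le.trans (mul_le_mul_of_nonneg_right (by linarith) variance_nonneg)
  have hM₃ : 0 ≤ M₃ := Finset.expect_nonneg fun ε _ ↦ by positivity
  -- With `ν = V M₁`, `quadratic_le` reads `M₃² - 2 M₃ ν + 3 ν² ≤ 2 V³`, whose left-hand side is
  -- `3 M₃² / 4 + 3 (ν - M₃ / 2) (ν - M₃ / 6)`.
  nlinarith [mul_nonneg (by linarith : 0 ≤ V * M₁ - M₃ / 2) (by linarith : 0 ≤ V * M₁ - M₃ / 6)]

theorem expect_abs_rademacherSum_pow_three_rpow_le (a : ι → ℝ) {t : ℝ} (ht : 0 ≤ t) :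
    (𝔼 ε, |rademacherSum a ε| ^ 3) ^ (2 * t) ≤ (8 / 3) ^ t * (∑ i, a i ^ 2) ^ (3 * t) := by
  have hV : 0 ≤ ∑ i, a i ^ 2 := by positivity
  have hM₃ : 0 ≤ 𝔼 ε, |rademacherSum a ε| ^ 3 := Finset.expect_nonneg fun ε _ ↦ by positivity
  calc (𝔼 ε, |rademacherSum a ε| ^ 3) ^ (2 * t)
      = ((𝔼 ε, |rademacherSum a ε| ^ 3) ^ 2) ^ t := Real.rpow_natCast_mul hM₃ 2 t
    _ ≤ (8 / 3 * (∑ i, a i ^ 2) ^ 3) ^ t :=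
        Real.rpow_le_rpow (by positivity) (sq_expect_abs_rademacherSum_pow_three_le a) ht
    _ = (8 / 3) ^ t * (∑ i, a i ^ 2) ^ (3 * t) := by
        rw [Real.mul_rpow (by norm_num) (by positivity), ← Real.rpow_natCast_mul hV,
          Nat.cast_ofNat]

/-- `K` is an admissible constant in Khinchin's inequality
`(∑ aᵢ²)^{1/2} ≤ K (𝔼 |∑ aᵢ εᵢ|^p)^{1/p}`. Both sides are raised to the power `p`. -/
def IsKhinchinBound (ι : Type*) [Fintype ι] [DecidableEq ι] (p K : ℝ) : Prop :=
  ∀ a : ι → ℝ, (∑ i, a i ^ 2) ^ (p / 2) ≤ K ^ p * 𝔼 ε, |rademacherSum a ε| ^ p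

theorem isKhinchinBound_one : IsKhinchinBound ι 1 √2 := by
  intro a
  simpa [Real.sqrt_eq_rpow] using sqrt_sum_sq_le_sqrt_two_mul_expect_abs a

theorem isKhinchinBound_of_le_two {p : ℝ} (hp : 0 < p) (hp2 : p ≤ 2) :
    IsKhinchinBound ι p ((8 / 3) ^ ((2 - p) / (2 * p))) := by
  intro a
  have interpolation :=
    expect_sq_rpow_le_expect_cube_mul (fun ε ↦ abs_nonneg (rademacherSum a ε)) hp hp2
  have third := expect_abs_rademacherSum_pow_three_rpow_le a (t := (2 - p) / 2) (by linarith)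
  rw [mul_div_cancel₀ _ two_ne_zero] at third
  simp only [sq_abs, expect_rademacherSum_sq] at interpolation
  set V := ∑ i, a i ^ 2
  set M₃ := 𝔼 ε, |rademacherSum a ε| ^ 3
  set Mₚ := 𝔼 ε, |rademacherSum a ε| ^ p
  have hMₚ : 0 ≤ Mₚ := Finset.expect_nonneg fun ε _ ↦ by positivity
  have const_rpow : ((8 / 3 : ℝ) ^ ((2 - p) / (2 * p))) ^ p = (8 / 3) ^ ((2 - p) / 2) := by
    rw [← Real.rpow_mul (by norm_num)]
    congr 1
    field_simp
  rw [const_rpow]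
  rcases (by positivity : 0 ≤ V).eq_or_lt with hV | hV
  · rw [← hV, Real.zero_rpow (by positivity)]
    positivity
  refine le_of_mul_le_mul_right ?_ (Real.rpow_pos_of_pos hV (3 * ((2 - p) / 2)))
  calc V ^ (p / 2) * V ^ (3 * ((2 - p) / 2)) = V ^ (3 - p) := by
        rw [← Real.rpow_add hV]
        congr 1
        ring
    _ ≤ M₃ ^ (2 - p) * Mₚ := interpolation
    _ ≤ (8 / 3) ^ ((2 - p) / 2) * V ^ (3 * ((2 - p) / 2)) * Mₚ :=
        mul_le_mul_of_nonneg_right third hMₚ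
    _ = (8 / 3) ^ ((2 - p) / 2) * Mₚ * V ^ (3 * ((2 - p) / 2)) := by ring

end Rademacher

section Blei

theorem sum_rpow_mul_prod_rpow_le {ι κ : Type*} [Fintype ι] [Fintype κ] (g : ι → ℝ≥0)
    (f : κ → ι → ℝ≥0) {q : ℝ} {w : κ → ℝ} (hq : 0 ≤ q) (hw : ∀ k, 0 ≤ w k)
    (hqw : q + ∑ k, w k = 1) :
    ∑ i, g i ^ q * ∏ k, f k i ^ w k ≤ (∑ i, g i) ^ q * ∏ k, (∑ i, f k i) ^ w k := by
  let _ : MeasurableSpace ι := ⊤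
  have h := ENNReal.lintegral_mul_prod_norm_pow_le (μ := MeasureTheory.Measure.count) (α := ι)
    Finset.univ (g := fun i ↦ (g i : ℝ≥0∞)) (f := fun k i ↦ (f k i : ℝ≥0∞))
    (measurable_of_countable _).aemeasurable
    (fun k _ ↦ (measurable_of_countable _).aemeasurable) q hqw hq fun k _ ↦ hw k
  simp only [MeasureTheory.lintegral_count, tsum_fintype, ← ENNReal.coe_rpow_of_nonneg _ hq,
    ← ENNReal.coe_rpow_of_nonneg _ (hw _), ← ENNReal.ofNNReal_finsetSum,
    ← ENNReal.ofNNReal_finsetProd, ← ENNReal.coe_mul, ENNReal.coe_le_coe] at h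
  exact h

theorem Lp_sum_le {ι κ : Type*} [Fintype ι] [Fintype κ] (f : ι → κ → ℝ≥0) {r : ℝ}
    (hr : 1 ≤ r) :
    (∑ i, (∑ j, f i j) ^ r) ^ (1 / r) ≤ ∑ j, (∑ i, f i j ^ r) ^ (1 / r) := by
  have h := Finset.le_sum_of_subadditive (fun v : ι → ℝ≥0 ↦ (∑ i, v i ^ r) ^ (1 / r))
    (by simp [(by linarith : r ≠ 0)]) (fun u v ↦ NNReal.Lp_add_le Finset.univ u v hr)
    Finset.univ fun j i ↦ f i j
  simpa only [Finset.sum_apply] using h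

variable {ι : Type*} [Fintype ι]

/-- The mixed `(ℓ¹, ℓ^r)` norm of `f` in the direction of the coordinate `k`: the `ℓ^r` norm in the
`k`-th coordinate, summed over all the others. These are the right-hand sides of Blei's inequality.
The dimension is split into cases only because the remaining coordinates are indexed by `Fin m`. -/
noncomputable def mixedNorm (r : ℝ) : ∀ {m : ℕ}, ((Fin m → ι) → ℝ≥0) → Fin m → ℝ≥0
  | 0, _, k => k.elim0
  | m + 1, f, k => ∑ j : Fin m → ι, (∑ i, f (k.insertNth i j) ^ r) ^ (1 / r)

theorem sum_pi_fin_succ {m : ℕ} {M : Type*} [AddCommMonoid M] (F : (Fin (m + 1) → ι) → M) :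
    ∑ j, F j = ∑ i, ∑ j : Fin m → ι, F (Fin.cons i j) := by
  rw [← (Fin.consEquiv fun _ : Fin (m + 1) ↦ ι).sum_comp, Fintype.sum_prod_type]
  rfl

theorem mixedNorm_succ_zero (r : ℝ) {m : ℕ} (f : (Fin (m + 1) → ι) → ℝ≥0) :
    mixedNorm r f 0 = ∑ j : Fin m → ι, (∑ i, f (Fin.cons i j) ^ r) ^ (1 / r) := by
  simp only [mixedNorm, Fin.insertNth_zero']

theorem mixedNorm_succ_succ (r : ℝ) {m : ℕ} (f : (Fin (m + 1) → ι) → ℝ≥0) (k : Fin m) :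
    mixedNorm r f k.succ = ∑ i, mixedNorm r (fun j ↦ f (Fin.cons i j)) k := by
  cases m with
  | zero => exact k.elim0
  | succ m =>
    simp only [mixedNorm, sum_pi_fin_succ, Fin.insertNth_succ_cons]

theorem sum_rpow_le_prod_mixedNorm_rpow {r w s : ℝ} (hr : 1 ≤ r) (hw : 0 ≤ w)
    (hs : s = 1 + w * (1 - 1 / r)) :
    ∀ {m : ℕ} (f : (Fin m → ι) → ℝ≥0), m * w ≤ s →
      ∑ j, f j ^ s ≤ (∑ j, f j) ^ (s - m * w) * ∏ k, mixedNorm r f k ^ w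
  | 0, f, _ => by simp
  | m + 1, f, hm => by
    have hr0 : 0 < r := one_pos.trans_le hr
    push_cast at hm ⊢
    have ih (i : ι) := sum_rpow_le_prod_mixedNorm_rpow hr hw hs (fun j ↦ f (Fin.cons i j))
      (by linarith)
    -- Hölder in the first coordinate. Minkowski turns the factor `A ^ r` split off from the masses
    -- of the slices into the mixed norm in that coordinate.
    let A (i : ι) : ℝ≥0 := ∑ j : Fin m → ι, f (Fin.cons i j)
    let T (k : Fin m) (i : ι) : ℝ≥0 := mixedNorm r (fun j ↦ f (Fin.cons i j)) k
    have split_exponent (i) :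
        A i ^ (s - m * w) = A i ^ (s - (m + 1) * w) * (A i ^ r) ^ (w / r) := by
      rw [← NNReal.rpow_mul, mul_div_cancel₀ _ hr0.ne',
        ← NNReal.rpow_add_of_nonneg _ (by linarith) hw]
      congr 1
      ring
    have holder := sum_rpow_mul_prod_rpow_le A (Fin.cons (fun i ↦ A i ^ r) T)
      (q := s - (m + 1) * w) (w := Fin.cons (w / r) fun _ ↦ w) (by linarith)
      (Fin.cases (div_nonneg hw hr0.le) fun _ ↦ hw) (by
        simp only [Fin.sum_univ_succ, Fin.cons_zero, Fin.cons_succ, Finset.sum_const,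
          Finset.card_univ, Fintype.card_fin, nsmul_eq_mul, hs]
        ring)
    simp only [Fin.prod_univ_succ, Fin.cons_zero, Fin.cons_succ] at holder
    have minkowski : (∑ i, A i ^ r) ^ (w / r) ≤ mixedNorm r f 0 ^ w := by
      rw [mixedNorm_succ_zero, div_eq_mul_one_div, mul_comm, NNReal.rpow_mul]
      exact NNReal.rpow_le_rpow (Lp_sum_le _ hr) hw
    calc ∑ j, f j ^ s = ∑ i, ∑ j : Fin m → ι, f (Fin.cons i j) ^ s := sum_pi_fin_succ _
      _ ≤ ∑ i, A i ^ (s - m * w) * ∏ k, T k i ^ w := Finset.sum_le_sum fun i _ ↦ ih i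
      _ = ∑ i, A i ^ (s - (m + 1) * w) * ((A i ^ r) ^ (w / r) * ∏ k, T k i ^ w) := by
          simp only [split_exponent, mul_assoc]
      _ ≤ (∑ i, A i) ^ (s - (m + 1) * w) *
            ((∑ i, A i ^ r) ^ (w / r) * ∏ k, (∑ i, T k i) ^ w) := holder
      _ ≤ (∑ i, A i) ^ (s - (m + 1) * w) *
            (mixedNorm r f 0 ^ w * ∏ k, (∑ i, T k i) ^ w) := by gcongr
      _ = (∑ j, f j) ^ (s - (m + 1) * w) * ∏ k, mixedNorm r f k ^ w := by
          simp only [Fin.prod_univ_succ, mixedNorm_succ_succ, sum_pi_fin_succ f, A, T]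

theorem sum_rpow_le_of_mixedNorm_le {r : ℝ} (hr : 1 ≤ r) {m : ℕ} (hm : m ≠ 0)
    (f : (Fin m → ι) → ℝ≥0) {B : ℝ≥0} (hB : ∀ k, mixedNorm r f k ≤ B) :
    ∑ j, f j ^ (m / (m - 1 + 1 / r)) ≤ B ^ (m / (m - 1 + 1 / r)) := by
  have hm1 : (1 : ℝ) ≤ m := by exact_mod_cast Nat.one_le_iff_ne_zero.2 hm
  have denom_pos : 0 < m - 1 + 1 / r := by
    have : 0 < 1 / r := by positivity
    linarith
  set w := 1 / (m - 1 + 1 / r) with hw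
  have hw0 : 0 ≤ w := by positivity
  have hs : m / (m - 1 + 1 / r) = m * w := by rw [hw, mul_one_div]
  have hw1 : w * (m - 1 + 1 / r) = 1 := one_div_mul_cancel denom_pos.ne'
  have h := sum_rpow_le_prod_mixedNorm_rpow (s := m * w) hr hw0 (by linear_combination hw1) f le_rfl
  rw [hs]
  calc ∑ j, f j ^ (m * w) ≤ ∏ k, mixedNorm r f k ^ w := by simpa using h
    _ ≤ ∏ _k : Fin m, B ^ w := by gcongr; exact hB _
    _ = B ^ (m * w) := by simp [← NNReal.rpow_mul_natCast, mul_comm]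

end Blei

section BohnenblustHille

variable {ι : Type*} [Fintype ι] {n : ℕ}

theorem norm_curryMid_apply_le
    (U : ContinuousMultilinearMap ℝ (fun _ : Fin (n + 1) ↦ ι → ℝ) ℝ) (k : Fin (n + 1))
    {z : ι → ℝ} (hz : ∀ i, |z i| ≤ 1) : ‖U.curryMid k z‖ ≤ ‖U‖ := by
  rw [← U.norm_curryMid k]
  exact (U.curryMid k).unit_le_opNorm z ((pi_norm_le_iff_of_nonneg zero_le_one).2 hz)

variable [DecidableEq ι]

/-- The coefficient `U(e_{i₁}, …, e_{iₙ})` of a multilinear form in the canonical basis. -/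
def multilinearCoeff (U : ContinuousMultilinearMap ℝ (fun _ : Fin n ↦ ι → ℝ) ℝ)
    (i : Fin n → ι) : ℝ :=
  U fun k ↦ Pi.single (i k) 1

theorem abs_multilinearCoeff_le (U : ContinuousMultilinearMap ℝ (fun _ : Fin n ↦ ι → ℝ) ℝ)
    (i : Fin n → ι) : |multilinearCoeff U i| ≤ ‖U‖ := by
  have h := U.le_opNorm_mul_pow_of_le (m := fun k ↦ Pi.single (i k) 1) (b := 1)
    ((pi_norm_le_iff_of_nonneg zero_le_one).2 fun k ↦ by rw [Pi.norm_single, norm_one])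
  simpa [multilinearCoeff] using h

theorem multilinearCoeff_curryMid
    (U : ContinuousMultilinearMap ℝ (fun _ : Fin (n + 1) ↦ ι → ℝ) ℝ) (k : Fin (n + 1))
    (z : ι → ℝ) (j : Fin n → ι) :
    multilinearCoeff (U.curryMid k z) j = ∑ i, multilinearCoeff U (k.insertNth i j) * z i := by
  have basis_insertNth (i : ι) :
      (fun l ↦ Pi.single ((k.insertNth i j : Fin (n + 1) → ι) l) 1 : Fin (n + 1) → ι → ℝ) =
        k.insertNth (Pi.single i 1 : ι → ℝ) fun l ↦ Pi.single (j l) 1 := by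
    rw [Fin.eq_insertNth_iff]
    exact ⟨by simp, by ext; simp [Fin.removeNth]⟩
  conv_lhs => rw [pi_eq_sum_univ' z]
  simp [multilinearCoeff, basis_insertNth, mul_comm]

/-- The Bohnenblust--Hille exponent `2n/(n+1)` of `n`-linear forms. -/
noncomputable def bhExponent (n : ℕ) : ℝ :=
  2 * n / (n + 1)

theorem bhExponent_one : bhExponent 1 = 1 := by
  norm_num [bhExponent]

theorem bhExponent_pos (hn : n ≠ 0) : 0 < bhExponent n := by
  unfold bhExponent
  positivity

theorem bhExponent_le_two (n : ℕ) : bhExponent n ≤ 2 := by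
  rw [bhExponent, div_le_iff₀ (by positivity)]
  linarith

variable (ι) in
/-- `C` is an admissible constant in the Bohnenblust--Hille inequality for real `n`-linear forms on
`ℓ_∞(ι)`. Both sides are raised to the power `2n/(n+1)`. -/
def IsBohnenblustHilleBound (n : ℕ) (C : ℝ) : Prop :=
  ∀ U : ContinuousMultilinearMap ℝ (fun _ : Fin n ↦ ι → ℝ) ℝ,
    ∑ i, |multilinearCoeff U i| ^ bhExponent n ≤ (C * ‖U‖) ^ bhExponent n

theorem IsBohnenblustHilleBound.mono {C C' : ℝ} (h : IsBohnenblustHilleBound ι n C)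
    (hC : 0 ≤ C) (hCC' : C ≤ C') : IsBohnenblustHilleBound ι n C' := fun U ↦
  (h U).trans <| Real.rpow_le_rpow (by positivity) (by gcongr) (by unfold bhExponent; positivity)

theorem isBohnenblustHilleBound_one : IsBohnenblustHilleBound ι 1 1 := by
  intro U
  let c (i : ι) : ℝ := multilinearCoeff U (Fin.cons i default)
  have abs_sign_le (i : ι) : |(SignType.sign (c i) : ℝ)| ≤ 1 := by
    rcases SignType.trichotomy (SignType.sign (c i)) with h | h | h <;> simp [h]
  simp only [bhExponent_one, Real.rpow_one, one_mul]
  calc ∑ i, |multilinearCoeff U i| = ∑ i, |c i| := by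
        simp only [sum_pi_fin_succ, Fintype.sum_unique, c]
    _ = multilinearCoeff (U.curryMid 0 fun i ↦ SignType.sign (c i)) default := by
        simp only [multilinearCoeff_curryMid, Fin.insertNth_zero', ← self_mul_sign, c]
    _ ≤ ‖U.curryMid 0 fun i ↦ SignType.sign (c i)‖ :=
        (le_abs_self _).trans (abs_multilinearCoeff_le _ _)
    _ ≤ ‖U‖ := norm_curryMid_apply_le U 0 abs_sign_le

theorem IsKhinchinBound.mixedNorm_multilinearCoeff_le {p K C : ℝ} (hp : 0 < p)
    (hK : IsKhinchinBound ι p K) (hK0 : 0 ≤ K) (hC0 : 0 ≤ C)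
    (hC : ∀ V : ContinuousMultilinearMap ℝ (fun _ : Fin n ↦ ι → ℝ) ℝ,
      ∑ j, |multilinearCoeff V j| ^ p ≤ (C * ‖V‖) ^ p)
    (U : ContinuousMultilinearMap ℝ (fun _ : Fin (n + 1) ↦ ι → ℝ) ℝ) (k : Fin (n + 1)) :
    mixedNorm (2 / p) (fun i ↦ ‖multilinearCoeff U i‖₊ ^ p) k ≤ (K * C * ‖U‖) ^ p := by
  let z (ε : ι → ℤˣ) (i : ι) : ℝ := ((ε i : ℤ) : ℝ)
  have abs_z_le (ε) (i) : |z ε i| ≤ 1 := by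
    rcases Int.units_eq_one_or (ε i) with h | h <;> simp [z, h]
  have slice (ε) :
      ∑ j, |rademacherSum (fun i ↦ multilinearCoeff U (k.insertNth i j)) ε| ^ p ≤ (C * ‖U‖) ^ p :=
    calc ∑ j, |rademacherSum (fun i ↦ multilinearCoeff U (k.insertNth i j)) ε| ^ p
        = ∑ j, |multilinearCoeff (U.curryMid k (z ε)) j| ^ p := by
          simp only [multilinearCoeff_curryMid, rademacherSum, z]
      _ ≤ (C * ‖U.curryMid k (z ε)‖) ^ p := hC _
      _ ≤ (C * ‖U‖) ^ p := by
          gcongr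
          exact norm_curryMid_apply_le U k (abs_z_le ε)
  calc (mixedNorm (2 / p) (fun i ↦ ‖multilinearCoeff U i‖₊ ^ p) k : ℝ)
      = ∑ j, (∑ i, multilinearCoeff U (k.insertNth i j) ^ 2) ^ (p / 2) := by
        simp only [mixedNorm, ← NNReal.rpow_mul, mul_div_cancel₀ _ hp.ne', one_div_div]
        push_cast
        simp
    _ ≤ ∑ j, K ^ p * 𝔼 ε, |rademacherSum (fun i ↦ multilinearCoeff U (k.insertNth i j)) ε| ^ p :=
        Finset.sum_le_sum fun j _ ↦ hK _
    _ = K ^ p * 𝔼 ε, ∑ j, |rademacherSum (fun i ↦ multilinearCoeff U (k.insertNth i j)) ε| ^ p := by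
        rw [← Finset.mul_sum, Finset.expect_sum_comm]
    _ ≤ K ^ p * (C * ‖U‖) ^ p := by
        gcongr
        exact Finset.expect_le Finset.univ_nonempty fun ε _ ↦ slice ε
    _ = (K * C * ‖U‖) ^ p := by rw [mul_assoc, Real.mul_rpow hK0 (by positivity)]

theorem IsBohnenblustHilleBound.succ {K C : ℝ} (hn : n ≠ 0)
    (hK : IsKhinchinBound ι (bhExponent n) K) (hC : IsBohnenblustHilleBound ι n C)
    (hK0 : 0 ≤ K) (hC0 : 0 ≤ C) : IsBohnenblustHilleBound ι (n + 1) (K * C) := by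
  intro U
  have hp := bhExponent_pos hn
  have one_le : 1 ≤ 2 / bhExponent n := (one_le_div hp).2 (bhExponent_le_two n)
  have exponent_eq : bhExponent n * ((n + 1) / (n + bhExponent n / 2)) = bhExponent (n + 1) := by
    unfold bhExponent
    push_cast
    field_simp
  have mixedNorm_le (k) : mixedNorm (2 / bhExponent n)
      (fun i ↦ ‖multilinearCoeff U i‖₊ ^ bhExponent n) k ≤
        (K * C * ‖U‖).toNNReal ^ bhExponent n := by
    rw [← NNReal.coe_le_coe, NNReal.coe_rpow, Real.coe_toNNReal _ (by positivity)]
    exact hK.mixedNorm_multilinearCoeff_le hp hK0 hC0 hC U k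
  have blei := sum_rpow_le_of_mixedNorm_le one_le n.succ_ne_zero _ mixedNorm_le
  simp only [Nat.cast_succ, add_sub_cancel_right, one_div_div, ← NNReal.rpow_mul,
    exponent_eq] at blei
  have blei_real := NNReal.coe_le_coe.2 blei
  push_cast at blei_real
  rwa [Real.coe_toNNReal _ (by positivity)] at blei_real

end BohnenblustHille

theorem eulerMascheroniConstant_lt_two_sub_two_mul_log_two :
    Real.eulerMascheroniConstant < 2 - 2 * Real.log 2 := by
  have bound := Real.eulerMascheroniConstant_lt_eulerMascheroniSeq' 16
  have log_sixteen : Real.log 16 = 4 * Real.log 2 := by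
    rw [show (16 : ℝ) = 2 ^ 4 by norm_num, Real.log_pow]
    norm_num
  have harmonic_sixteen : harmonic 16 = 2436559 / 720720 := by
    norm_num [harmonic, Finset.sum_range_succ]
  rw [Real.eulerMascheroniSeq', if_neg (by norm_num), Nat.cast_ofNat, log_sixteen,
    harmonic_sixteen] at bound
  push_cast at bound
  linarith [Real.log_two_gt_d9]

theorem half_le_logb_two :
    1 / 2 ≤ Real.logb 2 (Real.exp (1 - Real.eulerMascheroniConstant / 2) / √2) := by
  rw [Real.logb, le_div_iff₀ (Real.log_pos one_lt_two),
    Real.log_div (Real.exp_ne_zero _) (by positivity), Real.log_exp, Real.log_sqrt zero_le_two]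
  linarith [eulerMascheroniConstant_lt_two_sub_two_mul_log_two]

theorem eight_thirds_rpow_mul_sqrt_sub_one_le {x : ℝ} (hx : 1 ≤ x) :
    (8 / 3 : ℝ) ^ (1 / (2 * x)) * √(x - 1) ≤ √x := by
  have hx0 : 0 < x := by linarith
  have sq_le : (8 / 3 : ℝ) ^ (1 / x) * (x - 1) ≤ x :=
    calc (8 / 3 : ℝ) ^ (1 / x) * (x - 1)
        ≤ Real.exp 1 ^ (1 / x) * (x * Real.exp (-(1 / x))) := by
          gcongr
          · linarith [Real.exp_one_gt_d9]
          · have h := mul_le_mul_of_nonneg_left (Real.one_sub_le_exp_neg (1 / x)) hx0.le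
            rwa [mul_sub, mul_one, mul_one_div_cancel hx0.ne'] at h
      _ = x := by
          rw [Real.exp_one_rpow, mul_left_comm, ← Real.exp_add, add_neg_cancel, Real.exp_zero,
            mul_one]
  have sqrt_eq : (8 / 3 : ℝ) ^ (1 / (2 * x)) = √((8 / 3) ^ (1 / x)) := by
    rw [Real.sqrt_eq_rpow, ← Real.rpow_mul (by norm_num)]
    congr 1
    ring
  rw [sqrt_eq, ← Real.sqrt_mul (by positivity)]
  exact Real.sqrt_le_sqrt sq_le

theorem sqrt_le_rpow_logb_two {x : ℝ} (hx : 1 ≤ x) :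
    √x ≤ x ^ Real.logb 2 (Real.exp (1 - Real.eulerMascheroniConstant / 2) / √2) := by
  rw [Real.sqrt_eq_rpow]
  exact Real.rpow_le_rpow_of_exponent_le hx half_le_logb_two

theorem isBohnenblustHilleBound_sqrt_two_mul_sqrt {ι : Type*} [Fintype ι] [DecidableEq ι] {n : ℕ}
    (hn : 2 ≤ n) : IsBohnenblustHilleBound ι n (√2 * √(n - 1)) := by
  induction n, hn using Nat.le_induction with
  | base =>
    have khinchin : IsKhinchinBound ι (bhExponent 1) √2 := bhExponent_one ▸ isKhinchinBound_one
    have h := isBohnenblustHilleBound_one.succ one_ne_zero khinchin (Real.sqrt_nonneg 2) zero_le_one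
    convert h using 1
    norm_num
  | succ n hn ih =>
    have hn0 : n ≠ 0 := by positivity
    have hn1 : (1 : ℝ) ≤ n := by exact_mod_cast (by omega : 1 ≤ n)
    have khinchin := isKhinchinBound_of_le_two (ι := ι) (bhExponent_pos hn0) (bhExponent_le_two n)
    have exponent_eq : (2 - bhExponent n) / (2 * bhExponent n) = 1 / (2 * n) := by
      unfold bhExponent
      field_simp
      ring
    rw [exponent_eq] at khinchin
    refine (ih.succ hn0 khinchin (by positivity) (by positivity)).mono (by positivity) ?_
    push_cast
    rw [add_sub_cancel_right, mul_left_comm]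
    gcongr
    exact eight_thirds_rpow_mul_sqrt_sub_one_le hn1

theorem stmt2_general {ι : Type*} [Fintype ι] [DecidableEq ι] {n : ℕ} (hn : 2 ≤ n)
    (U : ContinuousMultilinearMap ℝ (fun _ : Fin n ↦ ι → ℝ) ℝ) :
    (∑ i : Fin n → ι, |U fun k ↦ Pi.single (i k) 1| ^ (2 * n / (n + 1) : ℝ)) ^
        ((n + 1) / (2 * n) : ℝ) ≤ √2 * √(n - 1) * ‖U‖ := by
  have hp : 0 < bhExponent n := bhExponent_pos (by omega)
  rw [← inv_div (2 * n : ℝ)]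
  exact (Real.rpow_inv_le_iff_of_pos (by positivity) (by positivity) hp).2
    (isBohnenblustHilleBound_sqrt_two_mul_sqrt hn U)

theorem stmt2 (n : ℕ) (hn : 2 ≤ n) (N : ℕ) (hN : 0 < N)
    (U : ContinuousMultilinearMap ℝ (fun _ : Fin n => (Fin N → ℝ)) ℝ)
    (D : ℝ) (hD : D = Real.exp (1 - Real.eulerMascheroniConstant / 2) / Real.sqrt 2) :
    BHreal n N U ≤ Real.sqrt 2 * ((n : ℝ) - 1) ^ Real.logb 2 D * ‖U‖ := by
  have sqrt_le : √(n - 1) ≤ (n - 1 : ℝ) ^ Real.logb 2 D :=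
    hD ▸ sqrt_le_rpow_logb_two (by linarith [show (2 : ℝ) ≤ n by exact_mod_cast hn])
  exact (stmt2_general hn U).trans (by gcongr)
end

section
/- Let γ denote the Euler–Mascheroni constant and D = e^{(1-γ)/2}. For every integer n ≥ 2, every positive integer N, and every n-linear form U : (ℂ^N)^n → ℂ, one has (∑_{i₁,…,iₙ=1}^N |U(e_{i₁},…,e_{iₙ})|^{2n/(n+1)})^{(n+1)/(2n)} ≤ (2/√π) · (n-1)^{log₂ D} · ‖U‖. -/
open Real

/-- The Bohnenblust--Hille quantity of an `n`-linear form on `ℓ_∞^N` over `ℂ`: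
`(∑_{i₁,…,iₙ} |U(e_{i₁},…,e_{iₙ})|^{2n/(n+1)})^{(n+1)/(2n)}`. -/
noncomputable def BHcomplex (n N : ℕ)
    (U : ContinuousMultilinearMap ℂ (fun _ : Fin n => (Fin N → ℂ)) ℂ) : ℝ :=
  (∑ i : Fin n → Fin N,
      ‖U (fun k => Pi.single (i k) (1 : ℂ))‖ ^ ((2 * n : ℝ) / (n + 1)))
    ^ ((n + 1 : ℝ) / (2 * n))

/-!
Call `K p` the best constant in the Khinchine inequality `‖a‖₂ ≤ K p * ‖∑ aⱼ wⱼ‖_p` for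
independent Steinhaus variables `wⱼ`. Applied in one of its variables, Khinchine's inequality turns
an `(n + 1)`-linear form of norm at most `1` into a random `n`-linear form of norm at most `1`, and
Blei's inequality for mixed norms glues the resulting estimates, one for each choice of the
distinguished variable. Hence the constants `BH n` for `n`-linear forms satisfy
`BH (n + 1) ≤ K (2 n / (n + 1)) * BH n`.

The factor with `n = 1` is Sawa's constant `K 1 = 2 / √π`. If all normalized coefficients are small,
Haagerup's method writes the first moment as an integral of a product of Bessel functions `J₀`,
which the inequality of arithmetic and geometric means and a comparison of `|J₀|^s` with a Gaussian
bound from below. If one coefficient `b` is large, average over its variable `w` first: the mean of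
`|v + b w|` has a quartic minorant in `|v|`, whose expectation only needs second and fourth moments.

For `n ≥ 2`, interpolating the `L²` norm between the `L^(2 n / (n + 1))` norm and the third moment,
which is at most `1.35` for normalized coefficients, gives
`K (2 n / (n + 1)) ≤ 1.35 ^ (1 / n) ≤ (n / (n - 1)) ^ log 1.35`. The product of these bounds
telescopes, and `log 1.35 ≤ (1 - γ) / (2 log 2)`.
-/

open MeasureTheory

/-! ### Mixed-norm inequalities for finite sums -/

section MixedNorms

variable {ι : Type*} [Fintype ι]

lemma sum_prod_rpow_le_prod_sum_rpow {κ : Type*} [Fintype κ] {f : κ → ι → ℝ} {w : κ → ℝ}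
    (hf : ∀ k x, 0 ≤ f k x) (hw : ∀ k, 0 ≤ w k) (hw₁ : ∑ k, w k = 1) :
    ∑ x, ∏ k, f k x ^ w k ≤ ∏ k, (∑ x, f k x) ^ w k := by
  let _ : MeasurableSpace ι := ⊤
  have holder := ENNReal.lintegral_prod_norm_pow_le (μ := (Measure.count : Measure ι))
    Finset.univ (f := fun k x => ENNReal.ofReal (f k x)) (fun _ _ => by fun_prop) hw₁
    (fun k _ => hw k)
  have hsum (k : κ) : 0 ≤ ∑ x, f k x := Finset.sum_nonneg fun x _ => hf k x
  simp only [lintegral_count, tsum_fintype, ENNReal.ofReal_rpow_of_nonneg (hf _ _) (hw _),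
    ← ENNReal.ofReal_sum_of_nonneg fun x _ => hf _ x,
    ENNReal.ofReal_rpow_of_nonneg (hsum _) (hw _),
    ← ENNReal.ofReal_prod_of_nonneg fun k _ => rpow_nonneg (hf k _) (w k),
    ← ENNReal.ofReal_prod_of_nonneg fun k _ => rpow_nonneg (hsum k) (w k)] at holder
  rw [← ENNReal.ofReal_sum_of_nonneg
    fun x _ => Finset.prod_nonneg fun k _ => rpow_nonneg (hf k x) (w k)] at holder
  exact (ENNReal.ofReal_le_ofReal_iff
    (Finset.prod_nonneg fun k _ => rpow_nonneg (hsum k) (w k))).1 holder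

lemma sum_rpow_mul_rpow_le {f g : ι → ℝ} {s t : ℝ} (hf : ∀ x, 0 ≤ f x) (hg : ∀ x, 0 ≤ g x)
    (hs : 0 ≤ s) (ht : 0 ≤ t) (hst : s + t = 1) :
    ∑ x, f x ^ s * g x ^ t ≤ (∑ x, f x) ^ s * (∑ x, g x) ^ t := by
  simpa [Fin.prod_univ_two] using sum_prod_rpow_le_prod_sum_rpow (f := ![f, g]) (w := ![s, t])
    (by simp [Fin.forall_fin_two, hf, hg]) (by simp [Fin.forall_fin_two, hs, ht])
    (by simpa [Fin.sum_univ_two] using hst)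

lemma prod_rpow_rpow {s t r : ℝ} {c : ι → ℝ} (hc : ∀ k, 0 ≤ c k) (hst : s * t = r) :
    (∏ k, c k ^ s) ^ t = ∏ k, c k ^ r := by
  rw [← Real.finsetProd_rpow _ _ fun k _ => rpow_nonneg (hc k) s]
  simp only [← Real.rpow_mul (hc _), hst]

lemma sum_insertNth {M : Type*} [AddCommMonoid M] {n : ℕ} (k : Fin (n + 1))
    (F : (Fin (n + 1) → ι) → M) :
    ∑ i, F i = ∑ y : Fin n → ι, ∑ x, F (k.insertNth x y) := by
  rw [← (Fin.insertNthEquiv (fun _ => ι) k).sum_comp, Fintype.sum_prod_type, Finset.sum_comm]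
  rfl

lemma sum_cons {M : Type*} [AddCommMonoid M] {n : ℕ} (F : (Fin (n + 1) → ι) → M) :
    ∑ i, F i = ∑ x, ∑ y : Fin n → ι, F (Fin.cons x y) := by
  rw [sum_insertNth 0, Finset.sum_comm]
  simp only [Fin.insertNth_zero']

lemma succ_removeNth_cons {α : Type*} {n : ℕ} (x : α) (y : Fin (n + 1) → α) (k : Fin (n + 1)) :
    k.succ.removeNth (Fin.cons x y : Fin (n + 2) → α) = Fin.cons x (k.removeNth y) := by
  ext j
  refine Fin.cases ?_ (fun j => ?_) j <;> simp [Fin.removeNth]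

lemma loomis_whitney_slice {n : ℕ} (hn : 1 ≤ n) {a : (Fin (n + 1) → ι) → ℝ}
    {b : Fin (n + 1) → (Fin n → ι) → ℝ} (ha : ∀ y, 0 ≤ a y) (hb : ∀ k z, 0 ≤ b k z)
    (hLW : ∑ y : Fin (n + 1) → ι, ∏ k, b k (k.removeNth y) ^ (1 / n : ℝ) ≤
      ∏ k, (∑ z, b k z) ^ (1 / n : ℝ)) :
    ∑ y, a y ^ (1 / (n + 1) : ℝ) * ∏ k, b k (k.removeNth y) ^ (1 / (n + 1) : ℝ) ≤
      (∑ y, a y) ^ (1 / (n + 1) : ℝ) * ∏ k, (∑ z, b k z) ^ (1 / (n + 1) : ℝ) := by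
  have : (0 : ℝ) < n := by exact_mod_cast hn
  have hexp : (1 / n : ℝ) * (n / (n + 1)) = 1 / (n + 1) := by field_simp
  have hprod (y : Fin (n + 1) → ι) : 0 ≤ ∏ k, b k (k.removeNth y) ^ (1 / n : ℝ) :=
    Finset.prod_nonneg fun k _ => rpow_nonneg (hb _ _) _
  have hsum (k : Fin (n + 1)) : 0 ≤ ∑ z, b k z := Finset.sum_nonneg fun z _ => hb k z
  calc ∑ y, a y ^ (1 / (n + 1) : ℝ) * ∏ k, b k (k.removeNth y) ^ (1 / (n + 1) : ℝ)
      = ∑ y, a y ^ (1 / (n + 1) : ℝ) *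
          (∏ k, b k (k.removeNth y) ^ (1 / n : ℝ)) ^ (n / (n + 1) : ℝ) := by
        simp only [prod_rpow_rpow (fun k => hb k _) hexp]
    _ ≤ (∑ y, a y) ^ (1 / (n + 1) : ℝ) *
          (∑ y : Fin (n + 1) → ι, ∏ k, b k (k.removeNth y) ^ (1 / n : ℝ)) ^ (n / (n + 1) : ℝ) :=
        sum_rpow_mul_rpow_le ha hprod (by positivity) (by positivity) (by field_simp; ring)
    _ ≤ (∑ y, a y) ^ (1 / (n + 1) : ℝ) *
          (∏ k, (∑ z, b k z) ^ (1 / n : ℝ)) ^ (n / (n + 1) : ℝ) := by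
        gcongr
        · exact rpow_nonneg (Finset.sum_nonneg fun y _ => ha y) _
        · exact Finset.sum_nonneg fun y _ => hprod y
    _ = (∑ y, a y) ^ (1 / (n + 1) : ℝ) * ∏ k, (∑ z, b k z) ^ (1 / (n + 1) : ℝ) := by
        rw [prod_rpow_rpow hsum hexp]

lemma loomis_whitney_two {g : Fin 2 → (Fin 1 → ι) → ℝ} :
    ∑ i : Fin 2 → ι, ∏ k, g k (k.removeNth i) = ∏ k, ∑ y, g k y := by
  rw [Fin.prod_univ_two, mul_comm, Finset.sum_mul_sum,
    ← (Equiv.funUnique (Fin 1) ι).symm.sum_comp, sum_cons]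
  refine Finset.sum_congr rfl fun x _ => Finset.sum_congr rfl fun y _ => ?_
  rw [Fin.prod_univ_two, mul_comm]
  congr 2
  ext j
  fin_cases j
  rfl

theorem discrete_loomis_whitney {n : ℕ} (hn : 1 ≤ n) (g : Fin (n + 1) → (Fin n → ι) → ℝ)
    (hg : ∀ k y, 0 ≤ g k y) :
    ∑ i : Fin (n + 1) → ι, ∏ k, g k (k.removeNth i) ^ (1 / n : ℝ) ≤
      ∏ k, (∑ y, g k y) ^ (1 / n : ℝ) := by
  induction n, hn using Nat.le_induction with
  | base => simpa using loomis_whitney_two.le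
  | succ n hn ih =>
    push_cast
    have hsum (x : ι) (k : Fin (n + 1)) : 0 ≤ ∑ z : Fin n → ι, g k.succ (Fin.cons x z) :=
      Finset.sum_nonneg fun _ _ => hg _ _
    calc ∑ i : Fin (n + 2) → ι, ∏ k, g k (k.removeNth i) ^ (1 / (n + 1) : ℝ)
        = ∑ x, ∑ y, g 0 y ^ (1 / (n + 1) : ℝ) * ∏ k : Fin (n + 1),
            g k.succ (Fin.cons x (k.removeNth y)) ^ (1 / (n + 1) : ℝ) := by
          rw [sum_cons]
          refine Finset.sum_congr rfl fun x _ => Finset.sum_congr rfl fun y _ => ?_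
          rw [Fin.prod_univ_succ, Fin.removeNth_zero, Fin.tail_cons]
          simp only [succ_removeNth_cons]
      _ ≤ ∑ x, (∑ y, g 0 y) ^ (1 / (n + 1) : ℝ) * ∏ k : Fin (n + 1),
            (∑ z : Fin n → ι, g k.succ (Fin.cons x z)) ^ (1 / (n + 1) : ℝ) :=
          Finset.sum_le_sum fun x _ => loomis_whitney_slice hn
            (b := fun k z => g k.succ (Fin.cons x z)) (hg 0) (fun _ _ => hg _ _)
            (ih _ fun _ _ => hg _ _)
      _ ≤ (∑ y, g 0 y) ^ (1 / (n + 1) : ℝ) * ∏ k : Fin (n + 1),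
            (∑ x, ∑ z : Fin n → ι, g k.succ (Fin.cons x z)) ^ (1 / (n + 1) : ℝ) := by
          rw [← Finset.mul_sum]
          refine mul_le_mul_of_nonneg_left ?_
            (rpow_nonneg (Finset.sum_nonneg fun _ _ => hg _ _) _)
          exact sum_prod_rpow_le_prod_sum_rpow (fun k x => hsum x k) (fun _ => by positivity)
            (by simp; field_simp)
      _ = ∏ k, (∑ y, g k y) ^ (1 / (n + 1) : ℝ) := by
          simp only [Fin.prod_univ_succ (n := n + 1), sum_cons]

lemma sum_rpow_mul_prod_rpow_le_s3 {m : ℕ} {a : ι → ℝ} {b : Fin m → ι → ℝ} (ha : ∀ i, 0 ≤ a i)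
    (hb : ∀ k i, 0 ≤ b k i) :
    ∑ i, a i ^ (1 / (m + 1) : ℝ) * ∏ k, b k i ^ (1 / (m + 1) : ℝ) ≤
      (∑ i, a i) ^ (1 / (m + 1) : ℝ) * ∏ k, (∑ i, b k i) ^ (1 / (m + 1) : ℝ) := by
  simpa [Fin.prod_univ_succ] using
    sum_prod_rpow_le_prod_sum_rpow (f := (Fin.cons a b : Fin (m + 1) → ι → ℝ))
      (w := fun _ => (1 / (m + 1) : ℝ)) (Fin.cases ha hb) (fun _ => by positivity)
      (by simp; field_simp)

lemma rpow_eq_prod_rpow_mul_prod_rpow {m : ℕ} (hm : 1 ≤ m) {x : ℝ} {s : Fin m → ℝ} (hx : 0 ≤ x)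
    (hs : ∀ k, x ^ 2 ≤ s k) :
    x ^ (2 * m / (m + 1) : ℝ) = (∏ k, s k ^ (1 / m : ℝ)) ^ (1 / (m + 1) : ℝ) *
      ∏ k, (x ^ 2 * s k ^ (-(1 / m) : ℝ)) ^ (1 / (m + 1) : ℝ) := by
  have hs₀ (k : Fin m) : 0 ≤ s k := (sq_nonneg x).trans (hs k)
  rcases hx.eq_or_lt with rfl | hx'
  · have hm' : m ≠ 0 := by omega
    have hexp : (1 / (m + 1) : ℝ) ≠ 0 := by positivity
    have hexp' : (2 * m / (m + 1) : ℝ) ≠ 0 := by positivity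
    simp only [ne_eq, OfNat.ofNat_ne_zero, not_false_eq_true, zero_pow, zero_mul,
      Real.zero_rpow hexp, Real.zero_rpow hexp', Finset.prod_const, Finset.card_univ,
      Fintype.card_fin, hm', mul_zero]
  · have hcancel (k : Fin m) : s k ^ (1 / m : ℝ) * (x ^ 2 * s k ^ (-(1 / m) : ℝ)) = x ^ 2 := by
      rw [mul_left_comm, ← Real.rpow_add ((pow_pos hx' 2).trans_le (hs k)), add_neg_cancel,
        Real.rpow_zero, mul_one]
    have hb (k : Fin m) : 0 ≤ x ^ 2 * s k ^ (-(1 / m) : ℝ) :=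
      mul_nonneg (sq_nonneg x) (rpow_nonneg (hs₀ k) _)
    rw [Real.finsetProd_rpow _ _ fun k _ => hb k, ← Real.mul_rpow
      (Finset.prod_nonneg fun k _ => rpow_nonneg (hs₀ k) _) (Finset.prod_nonneg fun k _ => hb k),
      ← Finset.prod_mul_distrib]
    simp only [hcancel, Finset.prod_const, Finset.card_univ, Fintype.card_fin]
    rw [← pow_mul, ← Real.rpow_natCast, ← Real.rpow_mul hx]
    push_cast
    ring_nf

lemma sum_mul_sum_insertNth_rpow {n : ℕ} {h : (Fin (n + 1) → ι) → ℝ} (hh : ∀ i, 0 ≤ h i)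
    (k : Fin (n + 1)) {s t : ℝ} (hst : 1 + s = t) (ht : t ≠ 0) :
    ∑ i : Fin (n + 1) → ι, h i * (∑ x, h (k.insertNth x (k.removeNth i))) ^ s =
      ∑ y : Fin n → ι, (∑ x, h (k.insertNth x y)) ^ t := by
  rw [sum_insertNth k]
  refine Finset.sum_congr rfl fun y _ => ?_
  simp only [Fin.removeNth_insertNth]
  rw [← Finset.sum_mul, ← hst, Real.rpow_one_add' (Finset.sum_nonneg fun x _ => hh _) (hst ▸ ht)]

/- The left side is interpolated between `n + 2` functions: one that is controlled by the
Loomis--Whitney inequality, and for each direction `k` one whose sum factors over the lines in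
direction `k`. -/
theorem blei_inequality {n : ℕ} (hn : 1 ≤ n) {f : (Fin (n + 1) → ι) → ℝ} (hf : ∀ i, 0 ≤ f i) :
    ∑ i, f i ^ (2 * (n + 1) / (n + 2) : ℝ) ≤
      ∏ k : Fin (n + 1), (∑ y : Fin n → ι, (∑ x, f (k.insertNth x y) ^ 2) ^ (n / (n + 1) : ℝ)) ^
        ((n + 1) / (n * (n + 2)) : ℝ) := by
  have : (0 : ℝ) < n := by exact_mod_cast hn
  let S (k : Fin (n + 1)) (y : Fin n → ι) : ℝ := ∑ x, f (k.insertNth x y) ^ 2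
  let T (k : Fin (n + 1)) : ℝ := ∑ y, S k y ^ (n / (n + 1) : ℝ)
  have hS (k : Fin (n + 1)) (y : Fin n → ι) : 0 ≤ S k y := Finset.sum_nonneg fun _ _ => sq_nonneg _
  have hT (k : Fin (n + 1)) : 0 ≤ T k := Finset.sum_nonneg fun y _ => rpow_nonneg (hS k y) _
  have hfS (i : Fin (n + 1) → ι) (k : Fin (n + 1)) : f i ^ 2 ≤ S k (k.removeNth i) := by
    simpa [S] using Finset.single_le_sum (f := fun x => f (k.insertNth x (k.removeNth i)) ^ 2)
      (fun _ _ => sq_nonneg _) (Finset.mem_univ (i k))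
  have hline (k : Fin (n + 1)) :
      ∑ i, f i ^ 2 * S k (k.removeNth i) ^ (-(1 / (n + 1 : ℕ)) : ℝ) = T k :=
    sum_mul_sum_insertNth_rpow (fun _ => sq_nonneg _) k (by push_cast; field_simp; ring)
      (by positivity)
  have hLW : ∑ i : Fin (n + 1) → ι, ∏ k, S k (k.removeNth i) ^ (1 / (n + 1 : ℕ) : ℝ) ≤
      ∏ k, T k ^ (1 / n : ℝ) := by
    refine le_of_eq_of_le ?_ (discrete_loomis_whitney hn (fun k y => S k y ^ (n / (n + 1) : ℝ))
      fun k y => rpow_nonneg (hS k y) _)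
    simp only [← Real.rpow_mul (hS _ _)]
    push_cast
    field_simp
  calc ∑ i, f i ^ (2 * (n + 1) / (n + 2) : ℝ)
      = ∑ i, (∏ k, S k (k.removeNth i) ^ (1 / (n + 1 : ℕ) : ℝ)) ^ (1 / ((n + 1 : ℕ) + 1) : ℝ) *
          ∏ k, (f i ^ 2 * S k (k.removeNth i) ^ (-(1 / (n + 1 : ℕ)) : ℝ)) ^
            (1 / ((n + 1 : ℕ) + 1) : ℝ) := by
        refine Finset.sum_congr rfl fun i _ => ?_
        rw [← rpow_eq_prod_rpow_mul_prod_rpow (by omega) (hf i) (hfS i)]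
        push_cast
        ring_nf
    _ ≤ (∏ k, T k ^ (1 / n : ℝ)) ^ (1 / ((n + 1 : ℕ) + 1) : ℝ) *
          ∏ k, T k ^ (1 / ((n + 1 : ℕ) + 1) : ℝ) := by
        refine (sum_rpow_mul_prod_rpow_le_s3
          (fun i => Finset.prod_nonneg fun k _ => rpow_nonneg (hS _ _) _)
          fun k i => mul_nonneg (sq_nonneg _) (rpow_nonneg (hS _ _) _)).trans ?_
        simp only [hline]
        gcongr
    _ = ∏ k, T k ^ ((n + 1) / (n * (n + 2)) : ℝ) := by
        rw [prod_rpow_rpow hT rfl, ← Finset.prod_mul_distrib]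
        refine Finset.prod_congr rfl fun k _ => ?_
        rw [← Real.rpow_add_of_nonneg (hT k) (by positivity) (by positivity)]
        congr 1
        push_cast
        field_simp
        ring

end MixedNorms

/-! ### Steinhaus sums -/

instance fact_two_pi_pos : Fact (0 < 2 * π) := ⟨two_pi_pos⟩

/-- The circle `ℝ / 2πℤ` of angles, on which the Steinhaus variables are modelled. -/
abbrev Phase : Type := AddCircle (2 * π)

/-- The uniform probability measure on the circle. -/
noncomputable abbrev phaseMeasure : Measure Phase := AddCircle.haarAddCircle

/-- The joint law of independent uniform angles indexed by `ι`. -/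
noncomputable abbrev steinhausMeasure (ι : Type*) [Fintype ι] : Measure (ι → Phase) :=
  Measure.pi fun _ => phaseMeasure

/-- The unimodular number `e^{ix}`; as a random variable on the circle it is a Steinhaus
variable. -/
noncomputable def expi (x : Phase) : ℂ := AddCircle.toCircle x

/-- The Steinhaus sum `∑ j ∈ s, a j * w j`, where `w j = e^{i ω j}`. Partial index sets `s` allow
the variables to be peeled off one at a time. -/
noncomputable def steinhausSum {ι : Type*} (s : Finset ι) (a : ι → ℂ) (ω : ι → Phase) : ℂ :=
  ∑ j ∈ s, a j * expi (ω j)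

lemma norm_expi (x : Phase) : ‖expi x‖ = 1 := Circle.norm_coe _

lemma expi_add (x y : Phase) : expi (x + y) = expi x * expi y := by
  simp [expi, AddCircle.toCircle_add]

lemma expi_zero : expi 0 = 1 := by simp [expi]

@[fun_prop]
lemma continuous_expi : Continuous expi :=
  continuous_subtype_val.comp AddCircle.continuous_toCircle

lemma expi_coe (θ : ℝ) : expi (θ : Phase) = Complex.exp (θ * Complex.I) := by
  rw [expi, AddCircle.toCircle_apply_mk, Circle.coe_exp, div_self two_pi_pos.ne', one_mul]

lemma exists_eq_norm_mul_expi (z : ℂ) : ∃ x, z = ‖z‖ * expi x :=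
  ⟨(z.arg : ℝ), by rw [expi_coe, Complex.norm_mul_exp_arg_mul_I]⟩

lemma norm_mul_expi (b : ℂ) (x : Phase) : ‖b * expi x‖ = ‖b‖ := by
  rw [norm_mul, norm_expi, mul_one]

@[fun_prop]
lemma continuous_re_mul_expi (c : ℂ) : Continuous fun x => (c * expi x).re :=
  Complex.continuous_re.comp (by fun_prop)

@[fun_prop]
lemma continuous_steinhausSum {ι : Type*} (s : Finset ι) (a : ι → ℂ) :
    Continuous (steinhausSum s a) := by
  unfold steinhausSum
  fun_prop

lemma integrable_of_continuous {X E : Type*} [TopologicalSpace X] [CompactSpace X]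
    [MeasurableSpace X] [OpensMeasurableSpace X] [NormedAddCommGroup E]
    [SecondCountableTopologyEither X E] {μ : Measure X} [IsFiniteMeasureOnCompacts μ] {f : X → E}
    (hf : Continuous f) : Integrable f μ :=
  hf.integrable_of_hasCompactSupport (HasCompactSupport.of_compactSpace f)

section Rotation

variable {E : Type*} [NormedAddCommGroup E] [NormedSpace ℝ E]

lemma integral_phase (f : Phase → E) :
    ∫ x, f x ∂phaseMeasure = (2 * π)⁻¹ • ∫ θ in (0 : ℝ)..(2 * π), f (θ : Phase) := by
  rw [AddCircle.integral_haarAddCircle]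
  congr 1
  simpa using (AddCircle.intervalIntegral_preimage (2 * π) 0 f).symm

lemma integral_comp_expi_mul (f : ℂ → E) {z : ℂ} (hz : ‖z‖ = 1) :
    ∫ x, f (expi x * z) ∂phaseMeasure = ∫ x, f (expi x) ∂phaseMeasure := by
  obtain ⟨y, hy⟩ := exists_eq_norm_mul_expi z
  rw [hz, Complex.ofReal_one, one_mul] at hy
  simp only [hy, ← expi_add]
  exact integral_add_right_eq_self (fun x => f (expi x)) y

lemma integral_comp_mul_expi (f : ℂ → E) (a : ℂ) :
    ∫ x, f (a * expi x) ∂phaseMeasure = ∫ x, f (‖a‖ * expi x) ∂phaseMeasure := by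
  obtain ⟨y, ha⟩ := exists_eq_norm_mul_expi a
  rw [← integral_comp_expi_mul (fun w => f (‖a‖ * w)) (norm_expi y)]
  congr! 3 with x
  rw [mul_left_comm, ← ha, mul_comm]

end Rotation

lemma integral_norm_add_mul_expi (v b : ℂ) :
    ∫ x, ‖v + b * expi x‖ ∂phaseMeasure = ∫ x, ‖(‖v‖ + ‖b‖ * expi x : ℂ)‖ ∂phaseMeasure := by
  obtain ⟨y, hv⟩ := exists_eq_norm_mul_expi v
  have hb : ‖b * expi (-y)‖ = ‖b‖ := norm_mul_expi b (-y)
  rw [← hb, ← integral_comp_mul_expi (fun w => ‖‖v‖ + w‖)]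
  congr! 2 with x
  calc ‖v + b * expi x‖ = ‖(v + b * expi x) * expi (-y)‖ := (norm_mul_expi _ _).symm
    _ = ‖‖v‖ + b * expi (-y) * expi x‖ := by
        nth_rw 1 [hv]
        rw [add_mul, mul_assoc, ← expi_add, add_neg_cancel, expi_zero, mul_one, mul_right_comm]

lemma integral_norm_add_mul_expi_comm (v b : ℂ) :
    ∫ x, ‖v + b * expi x‖ ∂phaseMeasure = ∫ x, ‖b + v * expi x‖ ∂phaseMeasure := by
  rw [← integral_neg_eq_self]
  congr! 2 with x
  calc ‖v + b * expi (-x)‖ = ‖(v + b * expi (-x)) * expi x‖ := (norm_mul_expi _ x).symm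
    _ = ‖b + v * expi x‖ := by
        rw [add_mul, mul_assoc, ← expi_add, neg_add_cancel, expi_zero, mul_one, add_comm]

lemma integral_comp_expi {f : ℂ → ℂ} (hf : DiffContOnCl ℂ f (Metric.ball 0 1)) :
    ∫ x, f (expi x) ∂phaseMeasure = f 0 := by
  rw [← DiffContOnCl.circleAverage (f := f) (c := 0) (R := 1) (by simpa using hf),
    Real.circleAverage, integral_phase fun x => f (expi x)]
  simp only [expi_coe, circleMap, zero_add, Complex.ofReal_one, one_mul]

section Average

variable {ι : Type*} [Fintype ι]

lemma integral_steinhaus_rotate {g : Phase → ι → Phase} (hg : Continuous g)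
    {F : (ι → Phase) → ℝ} (hF : Continuous F) :
    ∫ ω, F ω ∂(steinhausMeasure ι) =
      ∫ ω, ∫ φ, F (ω + g φ) ∂phaseMeasure ∂(steinhausMeasure ι) := by
  rw [integral_integral_swap]
  · simp only [integral_add_right_eq_self F, integral_const, probReal_univ, one_smul]
  · apply integrable_of_continuous
    unfold Function.uncurry
    fun_prop

lemma integral_steinhausSum_insert [DecidableEq ι] {s : Finset ι} {j : ι} (hj : j ∉ s)
    (a : ι → ℂ) {G : ℂ → ℝ} (hG : Continuous G) :
    ∫ ω, G (steinhausSum (insert j s) a ω) ∂(steinhausMeasure ι) =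
      ∫ ω, ∫ x, G (steinhausSum s a ω + a j * expi x) ∂phaseMeasure ∂(steinhausMeasure ι) := by
  rw [integral_steinhaus_rotate (g := fun φ => Pi.single (M := fun _ => Phase) j φ)
    (continuous_single (A := fun _ => Phase) j) (by fun_prop)]
  congr! 2 with ω
  rw [← integral_comp_expi_mul (fun w => G (steinhausSum s a ω + a j * w)) (norm_expi (ω j))]
  congr! 3 with φ
  have hs : ∀ i ∈ s, a i * expi ((ω + Pi.single (M := fun _ => Phase) j φ) i) =
      a i * expi (ω i) := fun i hi => by
    rw [Pi.add_apply, Pi.single_eq_of_ne (ne_of_mem_of_not_mem hi hj), add_zero]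
  rw [steinhausSum, Finset.sum_insert hj, Finset.sum_congr rfl hs, Pi.add_apply,
    Pi.single_eq_same, expi_add, mul_comm (expi (ω j)), add_comm, steinhausSum]

end Average

section Moments

lemma integral_re_mul_expi (c : ℂ) : ∫ x, (c * expi x).re ∂phaseMeasure = 0 := by
  have hodd := integral_comp_expi_mul (fun w => (c * w).re) (z := -1) (by simp)
  simp only [mul_neg, mul_one, Complex.neg_re, integral_neg] at hodd
  linarith

lemma integral_re_mul_expi_sq (c : ℂ) : ∫ x, (c * expi x).re ^ 2 ∂phaseMeasure = ‖c‖ ^ 2 / 2 := by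
  have hnorm (z : ℂ) : z.re ^ 2 = (‖z‖ ^ 2 + (z ^ 2).re) / 2 := by
    rw [Complex.sq_norm, Complex.normSq_apply, sq z, Complex.mul_re]
    ring
  have hmean : ∫ x, (c * expi x) ^ 2 ∂phaseMeasure = 0 := by
    rw [integral_comp_expi (f := fun z => (c * z) ^ 2)
      (Differentiable.diffContOnCl (by fun_prop))]
    simp
  have hre : ∫ x, ((c * expi x) ^ 2).re ∂phaseMeasure = 0 := by
    have := integral_re (𝕜 := ℂ) (μ := phaseMeasure) (f := fun x => (c * expi x) ^ 2)
      (integrable_of_continuous (by fun_prop))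
    simpa [hmean] using this
  have hcont : Continuous fun x => ((c * expi x) ^ 2).re :=
    Complex.continuous_re.comp (by fun_prop)
  simp only [hnorm, norm_mul_expi]
  rw [integral_div, integral_add (integrable_const _) (integrable_of_continuous hcont), hre]
  simp

lemma norm_add_mul_expi_sq (v b : ℂ) (x : Phase) :
    ‖v + b * expi x‖ ^ 2 =
      ‖v‖ ^ 2 + ‖b‖ ^ 2 + 2 * ((starRingEnd ℂ) v * b * expi x).re := by
  rw [← norm_mul_expi b x]
  simp only [Complex.sq_norm, Complex.normSq_apply, Complex.add_re, Complex.add_im,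
    Complex.mul_re, Complex.mul_im, Complex.conj_re, Complex.conj_im]
  ring

lemma integral_norm_add_mul_expi_sq (v b : ℂ) :
    ∫ x, ‖v + b * expi x‖ ^ 2 ∂phaseMeasure = ‖v‖ ^ 2 + ‖b‖ ^ 2 := by
  simp only [norm_add_mul_expi_sq]
  rw [integral_add (integrable_const _) (integrable_of_continuous (by fun_prop)),
    integral_const_mul, integral_re_mul_expi]
  simp

lemma integral_norm_add_mul_expi_pow_four (v b : ℂ) :
    ∫ x, ‖v + b * expi x‖ ^ 4 ∂phaseMeasure =
      ‖v‖ ^ 4 + 4 * ‖v‖ ^ 2 * ‖b‖ ^ 2 + ‖b‖ ^ 4 := by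
  have hexpand (x : Phase) : ‖v + b * expi x‖ ^ 4 =
      (‖v‖ ^ 2 + ‖b‖ ^ 2) ^ 2 +
        4 * (‖v‖ ^ 2 + ‖b‖ ^ 2) * ((starRingEnd ℂ) v * b * expi x).re +
        4 * ((starRingEnd ℂ) v * b * expi x).re ^ 2 := by
    rw [show ‖v + b * expi x‖ ^ 4 = (‖v + b * expi x‖ ^ 2) ^ 2 by ring, norm_add_mul_expi_sq]
    ring
  simp only [hexpand]
  rw [integral_add (integrable_of_continuous (by fun_prop))
      (integrable_of_continuous (by fun_prop)),
    integral_add (integrable_const _) (integrable_of_continuous (by fun_prop)),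
    integral_const_mul, integral_const_mul, integral_re_mul_expi, integral_re_mul_expi_sq,
    norm_mul, RCLike.norm_conj, integral_const, probReal_univ, one_smul]
  ring

variable {ι : Type*} [Fintype ι] (s : Finset ι) (a : ι → ℂ)

lemma integral_norm_steinhausSum_sq :
    ∫ ω, ‖steinhausSum s a ω‖ ^ 2 ∂(steinhausMeasure ι) = ∑ j ∈ s, ‖a j‖ ^ 2 := by
  classical
  induction s using Finset.induction_on with
  | empty => simp [steinhausSum]
  | insert j s hj ih =>
    rw [integral_steinhausSum_insert hj a (G := fun z => ‖z‖ ^ 2) (by fun_prop)]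
    simp only [integral_norm_add_mul_expi_sq]
    rw [integral_add (integrable_of_continuous (by fun_prop)) (integrable_const _),
      ih, Finset.sum_insert hj, integral_const, probReal_univ, one_smul, add_comm]

lemma integral_norm_steinhausSum_pow_four_le :
    ∫ ω, ‖steinhausSum s a ω‖ ^ 4 ∂(steinhausMeasure ι) ≤ 2 * (∑ j ∈ s, ‖a j‖ ^ 2) ^ 2 := by
  classical
  induction s using Finset.induction_on with
  | empty => simp [steinhausSum]
  | insert j s hj ih =>
    rw [integral_steinhausSum_insert hj a (G := fun z => ‖z‖ ^ 4) (by fun_prop)]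
    simp only [integral_norm_add_mul_expi_pow_four]
    rw [integral_add (integrable_of_continuous (by fun_prop)) (integrable_const _),
      integral_add (integrable_of_continuous (by fun_prop))
        (integrable_of_continuous (by fun_prop)),
      integral_mul_const, integral_const_mul, integral_norm_steinhausSum_sq,
      Finset.sum_insert hj, integral_const, probReal_univ, one_smul]
    nlinarith only [ih, sq_nonneg (‖a j‖ ^ 2)]

end Moments

/-! ### Reduction of the Bohnenblust--Hille inequality to Khinchine's inequality -/

/-- The Bohnenblust--Hille inequality with constant `C` for `n`-linear forms, expressed through
the coefficient tensor `u` of the form; `B` is any bound for the form on the closed unit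
polydisc. -/
def BohnenblustHilleBound (n : ℕ) (C : ℝ) : Prop :=
  ∀ (N : ℕ) (u : (Fin n → Fin N) → ℂ) (B : ℝ),
    (∀ z : Fin n → Fin N → ℂ, (∀ k j, ‖z k j‖ ≤ 1) → ‖∑ i, u i * ∏ k, z k (i k)‖ ≤ B) →
    ∑ i, ‖u i‖ ^ (2 * n / (n + 1) : ℝ) ≤ (C * B) ^ (2 * n / (n + 1) : ℝ)

/-- Khinchine's inequality `‖a‖₂ ≤ K * ‖∑ a j * w j‖_p` for Steinhaus variables, raised to the
power `p`. -/
def SteinhausKhinchineBound (p K : ℝ) : Prop :=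
  ∀ (N : ℕ) (a : Fin N → ℂ),
    (∑ j, ‖a j‖ ^ 2) ^ (p / 2) ≤
      K ^ p * ∫ ω, ‖steinhausSum Finset.univ a ω‖ ^ p ∂(steinhausMeasure (Fin N))

section Reduction

variable {n N : ℕ} {C K B : ℝ}

lemma bohnenblustHilleBound_one : BohnenblustHilleBound 1 1 := by
  intro N u B h
  have hdual := h (fun _ j => (starRingEnd ℂ) (u fun _ => j) / ‖u fun _ => j‖) fun _ j => by
    rw [norm_div, RCLike.norm_conj, Complex.norm_real, norm_norm]
    exact div_self_le_one _
  have hterm (i : Fin 1 → Fin N) :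
      u i * ∏ k, ((starRingEnd ℂ) (u fun _ => i k) / ‖u fun _ => i k‖ : ℂ) = (‖u i‖ : ℝ) := by
    have hi : (fun _ => i 0) = i := funext fun k => by rw [Subsingleton.elim k 0]
    rw [Fin.prod_univ_one, hi, ← mul_div_assoc, Complex.mul_conj', sq, mul_self_div_self]
  simp only [hterm] at hdual
  rw [← Complex.ofReal_sum, Complex.norm_real,
    Real.norm_of_nonneg (Finset.sum_nonneg fun i _ => norm_nonneg _)] at hdual
  norm_num
  exact hdual

lemma norm_sum_insertNth_le {u : (Fin (n + 1) → Fin N) → ℂ}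
    (hB : ∀ z : Fin (n + 1) → Fin N → ℂ, (∀ k j, ‖z k j‖ ≤ 1) →
      ‖∑ i, u i * ∏ k, z k (i k)‖ ≤ B)
    (k : Fin (n + 1)) {w : Fin N → ℂ} (hw : ∀ j, ‖w j‖ ≤ 1) {z : Fin n → Fin N → ℂ}
    (hz : ∀ k j, ‖z k j‖ ≤ 1) :
    ‖∑ y : Fin n → Fin N, (∑ x, u (k.insertNth x y) * w x) * ∏ l, z l (y l)‖ ≤ B := by
  refine le_of_eq_of_le ?_ (hB (k.insertNth w z) fun l j => ?_)
  · rw [sum_insertNth k]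
    simp only [Fin.prod_univ_succAbove _ k, Fin.insertNth_apply_same,
      Fin.insertNth_apply_succAbove, Finset.sum_mul, mul_assoc]
  · refine Fin.succAboveCases k ?_ (fun l => ?_) l
    · simpa using hw j
    · simpa using hz l j

lemma sum_rpow_sum_insertNth_le (hC : 0 ≤ C) (hK : 0 ≤ K) (hB₀ : 0 ≤ B)
    (hBH : BohnenblustHilleBound n C) (hKh : SteinhausKhinchineBound (2 * n / (n + 1)) K)
    {u : (Fin (n + 1) → Fin N) → ℂ}
    (hB : ∀ z : Fin (n + 1) → Fin N → ℂ, (∀ k j, ‖z k j‖ ≤ 1) →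
      ‖∑ i, u i * ∏ k, z k (i k)‖ ≤ B)
    (k : Fin (n + 1)) :
    ∑ y : Fin n → Fin N, (∑ x, ‖u (k.insertNth x y)‖ ^ 2) ^ (n / (n + 1) : ℝ) ≤
      (K * C * B) ^ (2 * n / (n + 1) : ℝ) := by
  set p : ℝ := 2 * n / (n + 1) with hp
  have hp₀ : 0 ≤ p := by positivity
  let a (y : Fin n → Fin N) (x : Fin N) : ℂ := u (k.insertNth x y)
  have hint (y : Fin n → Fin N) : Integrable (fun ω => ‖steinhausSum Finset.univ (a y) ω‖ ^ p)
      (steinhausMeasure (Fin N)) :=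
    integrable_of_continuous (Continuous.rpow_const (by fun_prop) fun _ => Or.inr hp₀)
  have hpoint (ω : Fin N → Phase) :
      ∑ y, ‖steinhausSum Finset.univ (a y) ω‖ ^ p ≤ (C * B) ^ p :=
    hBH N _ B fun z hz => norm_sum_insertNth_le hB k (fun j => (norm_expi (ω j)).le) hz
  calc ∑ y : Fin n → Fin N, (∑ x, ‖a y x‖ ^ 2) ^ (n / (n + 1) : ℝ)
      = ∑ y : Fin n → Fin N, (∑ x, ‖a y x‖ ^ 2) ^ (p / 2) := by
        rw [hp, mul_div_assoc, mul_div_cancel_left₀ _ two_ne_zero]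
    _ ≤ ∑ y, K ^ p * ∫ ω, ‖steinhausSum Finset.univ (a y) ω‖ ^ p ∂(steinhausMeasure (Fin N)) :=
        Finset.sum_le_sum fun y _ => hKh N (a y)
    _ = K ^ p * ∫ ω, ∑ y, ‖steinhausSum Finset.univ (a y) ω‖ ^ p ∂(steinhausMeasure (Fin N)) := by
        rw [← Finset.mul_sum, integral_finsetSum _ fun y _ => hint y]
    _ ≤ K ^ p * ∫ _, (C * B) ^ p ∂(steinhausMeasure (Fin N)) := by
        refine mul_le_mul_of_nonneg_left ?_ (rpow_nonneg hK p)
        exact integral_mono (integrable_finsetSum _ fun y _ => hint y) (integrable_const _) hpoint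
    _ = (K * C * B) ^ p := by
        rw [integral_const, probReal_univ, one_smul, mul_assoc,
          Real.mul_rpow hK (mul_nonneg hC hB₀)]

theorem BohnenblustHilleBound.succ (hn : 1 ≤ n) (hC : 0 ≤ C) (hK : 0 ≤ K)
    (hBH : BohnenblustHilleBound n C) (hKh : SteinhausKhinchineBound (2 * n / (n + 1)) K) :
    BohnenblustHilleBound (n + 1) (K * C) := by
  intro N u B hB
  have : (0 : ℝ) < n := by exact_mod_cast hn
  have hB₀ : 0 ≤ B := (norm_nonneg _).trans (hB 0 (by simp))
  have hsum (k : Fin (n + 1)) :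
      0 ≤ ∑ y : Fin n → Fin N, (∑ x, ‖u (k.insertNth x y)‖ ^ 2) ^ (n / (n + 1) : ℝ) :=
    Finset.sum_nonneg fun _ _ => rpow_nonneg (Finset.sum_nonneg fun _ _ => sq_nonneg _) _
  have hexp : (2 * (n + 1 : ℕ) / ((n + 1 : ℕ) + 1) : ℝ) = 2 * (n + 1) / (n + 2) := by
    push_cast
    ring
  rw [hexp]
  calc ∑ i, ‖u i‖ ^ (2 * (n + 1) / (n + 2) : ℝ)
      ≤ ∏ k : Fin (n + 1), (∑ y : Fin n → Fin N,
          (∑ x, ‖u (k.insertNth x y)‖ ^ 2) ^ (n / (n + 1) : ℝ)) ^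
            ((n + 1) / (n * (n + 2)) : ℝ) := blei_inequality hn fun i => norm_nonneg (u i)
    _ ≤ ∏ _k : Fin (n + 1), ((K * C * B) ^ (2 * n / (n + 1) : ℝ)) ^
          ((n + 1) / (n * (n + 2)) : ℝ) :=
        Finset.prod_le_prod (fun k _ => rpow_nonneg (hsum k) _) fun k _ =>
          rpow_le_rpow (hsum k) (sum_rpow_sum_insertNth_le hC hK hB₀ hBH hKh hB k) (by positivity)
    _ = (K * C * B) ^ (2 * (n + 1) / (n + 2) : ℝ) := by
        have hKCB : 0 ≤ K * C * B := by positivity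
        rw [Finset.prod_const, Finset.card_univ, Fintype.card_fin, ← Real.rpow_natCast,
          ← Real.rpow_mul hKCB, ← Real.rpow_mul hKCB]
        congr 1
        push_cast
        field_simp

end Reduction

/-! ### The Bessel functions `J₀` and `J₁` -/

/-- The Bessel function `J₀`, as the characteristic function of the real part of a Steinhaus
variable. -/
noncomputable def besselJ0 (t : ℝ) : ℝ := ∫ x, cos (t * (expi x).re) ∂phaseMeasure

/-- The Bessel function `J₁ = -J₀'`. -/
noncomputable def besselJ1 (t : ℝ) : ℝ :=
  ∫ x, (expi x).re * sin (t * (expi x).re) ∂phaseMeasure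

section Bessel

@[fun_prop]
lemma continuous_re_expi : Continuous fun x => (expi x).re :=
  Complex.continuous_re.comp continuous_expi

lemma abs_re_expi_le_one (x : Phase) : |(expi x).re| ≤ 1 :=
  (Complex.abs_re_le_norm _).trans (norm_expi x).le

lemma integral_comp_re_expi (f : ℝ → ℝ) :
    ∫ x, f (expi x).re ∂phaseMeasure = (2 * π)⁻¹ * ∫ θ in (0 : ℝ)..(2 * π), f (cos θ) := by
  rw [integral_phase fun x => f (expi x).re]
  simp only [expi_coe, Complex.exp_ofReal_mul_I_re, smul_eq_mul]

lemma hasDerivAt_integral_phase {F F' : ℝ → Phase → ℝ} {C : ℝ} (hF : ∀ t, Continuous (F t))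
    (hF' : ∀ t, Continuous (F' t)) (hC : ∀ t x, ‖F' t x‖ ≤ C)
    (hderiv : ∀ t x, HasDerivAt (fun s => F s x) (F' t x) t) (t : ℝ) :
    HasDerivAt (fun s => ∫ x, F s x ∂phaseMeasure) (∫ x, F' t x ∂phaseMeasure) t :=
  (hasDerivAt_integral_of_dominated_loc_of_deriv_le (bound := fun _ => C) Filter.univ_mem
    (.of_forall fun s => (integrable_of_continuous (hF s)).aestronglyMeasurable)
    (integrable_of_continuous (hF t)) (integrable_of_continuous (hF' t)).aestronglyMeasurable
    (.of_forall fun x s _ => hC s x) (integrable_const _)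
    (.of_forall fun x s _ => hderiv s x)).2

lemma hasDerivAt_besselJ0 (t : ℝ) : HasDerivAt besselJ0 (-besselJ1 t) t := by
  have hderiv := hasDerivAt_integral_phase (C := 1)
    (F := fun t x => cos (t * (expi x).re))
    (F' := fun t x => -((expi x).re * sin (t * (expi x).re)))
    (fun t => by fun_prop) (fun t => by fun_prop)
    (fun t x => by
      rw [norm_neg, norm_mul]
      exact mul_le_one₀ (abs_re_expi_le_one x) (norm_nonneg _) (abs_sin_le_one _))
    (fun t x => by
      refine ((hasDerivAt_id t).mul_const (expi x).re).cos.congr_deriv ?_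
      simp only [id_eq]
      ring) t
  rwa [integral_neg] at hderiv

lemma hasDerivAt_besselJ1_integral (t : ℝ) :
    HasDerivAt besselJ1 (∫ x, (expi x).re ^ 2 * cos (t * (expi x).re) ∂phaseMeasure) t :=
  hasDerivAt_integral_phase (C := 1)
    (F := fun t x => (expi x).re * sin (t * (expi x).re))
    (F' := fun t x => (expi x).re ^ 2 * cos (t * (expi x).re))
    (fun t => by fun_prop) (fun t => by fun_prop)
    (fun t x => by
      rw [norm_mul, norm_pow]
      exact mul_le_one₀ (pow_le_one₀ (norm_nonneg _) (abs_re_expi_le_one x)) (norm_nonneg _)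
        (abs_cos_le_one _))
    (fun t x => by
      refine (((hasDerivAt_id t).mul_const (expi x).re).sin.const_mul (expi x).re).congr_deriv ?_
      simp only [id_eq]
      ring) t

/- Bessel's equation: integrate the derivative of `sin θ * sin (t * cos θ)` over a period. -/
lemma besselJ1_add_mul_integral (t : ℝ) :
    besselJ1 t + t * ∫ x, (expi x).re ^ 2 * cos (t * (expi x).re) ∂phaseMeasure =
      t * besselJ0 t := by
  have hperiod : ∫ θ in (0 : ℝ)..(2 * π), (cos θ * sin (t * cos θ) +
      t * (cos θ ^ 2 * cos (t * cos θ)) - t * cos (t * cos θ)) = 0 := by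
    rw [intervalIntegral.integral_eq_sub_of_hasDerivAt (f := fun θ => sin θ * sin (t * cos θ))]
    · simp
    · intro θ _
      refine ((hasDerivAt_sin θ).mul ((hasDerivAt_cos θ).const_mul t).sin).congr_deriv ?_
      rw [cos_sq']
      ring
    · exact Continuous.intervalIntegrable (by fun_prop) _ _
  have hphase := integral_comp_re_expi
    fun y => y * sin (t * y) + t * (y ^ 2 * cos (t * y)) - t * cos (t * y)
  rw [hperiod, mul_zero, integral_sub (integrable_of_continuous (by fun_prop))
    (integrable_of_continuous (by fun_prop)), integral_add (integrable_of_continuous (by fun_prop))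
    (integrable_of_continuous (by fun_prop)), integral_const_mul, integral_const_mul] at hphase
  exact sub_eq_zero.1 hphase

lemma hasDerivAt_mul_besselJ1 (t : ℝ) :
    HasDerivAt (fun s => s * besselJ1 s) (t * besselJ0 t) t := by
  refine ((hasDerivAt_id t).mul (hasDerivAt_besselJ1_integral t)).congr_deriv ?_
  simpa only [one_mul, id_eq] using besselJ1_add_mul_integral t

lemma hasDerivAt_besselJ1 {t : ℝ} (ht : t ≠ 0) :
    HasDerivAt besselJ1 (besselJ0 t - besselJ1 t / t) t := by
  refine (hasDerivAt_besselJ1_integral t).congr_deriv ?_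
  rw [eq_sub_iff_add_eq', div_add' _ _ _ ht, div_eq_iff ht, mul_comm _ t, mul_comm _ t]
  exact besselJ1_add_mul_integral t

@[fun_prop]
lemma continuous_besselJ0 : Continuous besselJ0 :=
  continuous_iff_continuousAt.2 fun t => (hasDerivAt_besselJ0 t).continuousAt

lemma abs_besselJ0_le_one (t : ℝ) : |besselJ0 t| ≤ 1 := by
  have := norm_integral_le_of_norm_le_const (μ := phaseMeasure) (C := 1)
    (f := fun x => cos (t * (expi x).re)) (.of_forall fun x => abs_cos_le_one _)
  simpa [besselJ0] using this

lemma besselJ0_zero : besselJ0 0 = 1 := by simp [besselJ0]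

/-- The `n`-th partial sum of the power series of `J₀`. -/
noncomputable def besselJ0Partial (n : ℕ) (t : ℝ) : ℝ :=
  ∑ k ∈ Finset.range n, (-1) ^ k * (t / 2) ^ (2 * k) / (k.factorial : ℝ) ^ 2

/-- The `n`-th partial sum of the power series of `J₁`. -/
noncomputable def besselJ1Partial (n : ℕ) (t : ℝ) : ℝ :=
  ∑ k ∈ Finset.range n,
    (-1) ^ k * (t / 2) ^ (2 * k + 1) / (k.factorial * (k + 1).factorial : ℝ)

lemma hasDerivAt_besselJ0Partial (n : ℕ) (t : ℝ) :
    HasDerivAt (besselJ0Partial (n + 1)) (-besselJ1Partial n t) t := by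
  have hterm (k : ℕ) (t : ℝ) :
      HasDerivAt (fun s : ℝ => (-1) ^ (k + 1) * (s / 2) ^ (2 * (k + 1)) /
          ((k + 1).factorial : ℝ) ^ 2)
        (-((-1) ^ k * (t / 2) ^ (2 * k + 1) / (k.factorial * (k + 1).factorial : ℝ))) t := by
    refine (((((hasDerivAt_id t).div_const 2).pow (2 * (k + 1))).const_mul
      ((-1) ^ (k + 1))).div_const (((k + 1).factorial : ℝ) ^ 2)).congr_deriv ?_
    have hk : (k.factorial : ℝ) ≠ 0 := by positivity
    simp only [Nat.factorial_succ, id_eq]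
    push_cast
    rw [show 2 * (k + 1) - 1 = 2 * k + 1 by omega]
    field_simp
    ring
  have hpartial : besselJ0Partial (n + 1) = fun s : ℝ => ∑ k ∈ Finset.range n,
      (-1) ^ (k + 1) * (s / 2) ^ (2 * (k + 1)) / ((k + 1).factorial : ℝ) ^ 2 + 1 := by
    ext s
    simp [besselJ0Partial, Finset.sum_range_succ']
  rw [hpartial, besselJ1Partial, ← Finset.sum_neg_distrib]
  exact (HasDerivAt.fun_sum fun k _ => hterm k t).add_const 1

lemma hasDerivAt_mul_besselJ1Partial (n : ℕ) (t : ℝ) :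
    HasDerivAt (fun s => s * besselJ1Partial n s) (t * besselJ0Partial n t) t := by
  simp only [besselJ1Partial, besselJ0Partial, Finset.mul_sum]
  refine HasDerivAt.fun_sum fun k _ => ?_
  refine ((hasDerivAt_id t).mul (((((hasDerivAt_id t).div_const 2).pow (2 * k + 1)).const_mul
    ((-1) ^ k)).div_const (k.factorial * (k + 1).factorial : ℝ))).congr_deriv ?_
  have hk : (k.factorial : ℝ) ≠ 0 := by positivity
  simp only [Pi.pow_apply, Nat.factorial_succ, id_eq, Nat.add_sub_cancel]
  push_cast
  field_simp
  ring

lemma nonneg_of_hasDerivAt_nonneg {f f' : ℝ → ℝ} (hf : ∀ x, HasDerivAt f (f' x) x)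
    (h₀ : f 0 = 0) (hf' : ∀ x, 0 ≤ x → 0 ≤ f' x) {x : ℝ} (hx : 0 ≤ x) : 0 ≤ f x := by
  have hmono : MonotoneOn f (Set.Ici 0) :=
    monotoneOn_of_hasDerivWithinAt_nonneg (convex_Ici 0)
      (fun y _ => (hf y).continuousAt.continuousWithinAt) (fun y _ => (hf y).hasDerivWithinAt)
      fun y hy => hf' y (interior_subset hy)
  exact h₀ ▸ hmono Set.self_mem_Ici hx hx

lemma besselJ1_alternating_of_besselJ0 {n : ℕ}
    (hJ0 : ∀ t, 0 ≤ t → 0 ≤ (-1) ^ n * (besselJ0 t - besselJ0Partial n t)) {t : ℝ} (ht : 0 ≤ t) :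
    0 ≤ (-1) ^ n * (besselJ1 t - besselJ1Partial n t) := by
  rcases ht.eq_or_lt with rfl | ht'
  · simp [besselJ1, besselJ1Partial]
  have hmul := nonneg_of_hasDerivAt_nonneg
    (f := fun s => (-1) ^ n * (s * besselJ1 s - s * besselJ1Partial n s))
    (fun s => ((hasDerivAt_mul_besselJ1 s).sub (hasDerivAt_mul_besselJ1Partial n s)).const_mul _)
    (by simp) (fun s hs => by
      rw [← mul_sub, mul_left_comm]
      exact mul_nonneg hs (hJ0 s hs)) ht
  rw [← mul_sub, mul_left_comm] at hmul
  exact nonneg_of_mul_nonneg_right hmul ht'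

/- Starting from `J₀ ≤ 1`, integrate the relations `(t * J₁)' = t * J₀` and `J₀' = -J₁`
alternately. -/
lemma besselJ0_alternating {n : ℕ} (hn : 1 ≤ n) {t : ℝ} (ht : 0 ≤ t) :
    0 ≤ (-1) ^ n * (besselJ0 t - besselJ0Partial n t) := by
  induction n, hn using Nat.le_induction generalizing t with
  | base => simpa [besselJ0Partial] using (abs_le.1 (abs_besselJ0_le_one t)).2
  | succ n _ ih =>
    refine nonneg_of_hasDerivAt_nonneg
      (f := fun s => (-1) ^ (n + 1) * (besselJ0 s - besselJ0Partial (n + 1) s))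
      (fun s => ((hasDerivAt_besselJ0 s).sub (hasDerivAt_besselJ0Partial n s)).const_mul _)
      (by simp [besselJ0_zero, besselJ0Partial, Finset.sum_range_succ']) (fun s hs => ?_) ht
    convert besselJ1_alternating_of_besselJ0 (fun _ h => ih h) hs using 1
    ring

lemma besselJ1_alternating {n : ℕ} (hn : 1 ≤ n) {t : ℝ} (ht : 0 ≤ t) :
    0 ≤ (-1) ^ n * (besselJ1 t - besselJ1Partial n t) :=
  besselJ1_alternating_of_besselJ0 (fun _ h => besselJ0_alternating hn h) ht

lemma one_sub_sq_div_four_le_besselJ0 {t : ℝ} (ht : 0 ≤ t) : 1 - t ^ 2 / 4 ≤ besselJ0 t := by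
  have := besselJ0_alternating (n := 2) (by norm_num) ht
  simp only [besselJ0Partial, Finset.sum_range_succ, Nat.factorial] at this
  norm_num at this
  linarith

lemma abs_besselJ0_le_exp {t : ℝ} (ht : 0 ≤ t) (ht₂ : t ≤ 2) :
    |besselJ0 t| ≤ exp (-(t ^ 2 / 4)) := by
  have hsq : t ^ 2 ≤ 4 := by nlinarith
  have hlower := one_sub_sq_div_four_le_besselJ0 ht
  have hupper := besselJ0_alternating (n := 3) (by norm_num) ht
  simp only [besselJ0Partial, Finset.sum_range_succ, Nat.factorial] at hupper
  norm_num at hupper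
  rw [abs_of_nonneg (by linarith)]
  calc besselJ0 t ≤ (1 - t ^ 2 / 8) ^ 2 := by linarith
    _ ≤ exp (-(t ^ 2 / 8)) ^ 2 :=
        pow_le_pow_left₀ (by linarith) (by linarith [add_one_le_exp (-(t ^ 2 / 8))]) 2
    _ = exp (-(t ^ 2 / 4)) := by
        rw [← exp_nat_mul]
        congr 1
        push_cast
        ring

lemma antitoneOn_besselJ0_sq_add_besselJ1_sq :
    AntitoneOn (fun t => besselJ0 t ^ 2 + besselJ1 t ^ 2) (Set.Ioi 0) := by
  have hderiv (t : ℝ) (ht : t ∈ Set.Ioi (0 : ℝ)) :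
      HasDerivAt (fun t => besselJ0 t ^ 2 + besselJ1 t ^ 2) (-(2 * besselJ1 t ^ 2 / t)) t := by
    refine (((hasDerivAt_besselJ0 t).pow 2).add
      ((hasDerivAt_besselJ1 (ne_of_gt ht)).pow 2)).congr_deriv ?_
    simp only [Nat.cast_ofNat, Nat.add_one_sub_one, pow_one]
    ring
  refine antitoneOn_of_hasDerivWithinAt_nonpos (convex_Ioi 0)
    (fun t ht => (hderiv t ht).continuousAt.continuousWithinAt)
    (fun t ht => (hderiv t (interior_subset ht)).hasDerivWithinAt) fun t ht => ?_
  have ht' : 0 < t := interior_subset ht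
  have : 0 ≤ 2 * besselJ1 t ^ 2 / t := by positivity
  linarith

/-- The value at `1.84` of the Gaussian majorant `exp (-t² / 4)` of `J₀`, which bounds `|J₀|` on
`[1.84, ∞)`: the second extremum of `J₀`, at `t ≈ 3.83`, has absolute value `≈ 0.403`. -/
noncomputable def besselTailBound : ℝ := exp (-(1.84 ^ 2 / 4))

lemma le_besselTailBound : 0.4285 ≤ besselTailBound := by
  have hpow : besselTailBound = (exp 0.2116 ^ 4)⁻¹ := by
    rw [besselTailBound, ← exp_nat_mul, ← exp_neg]
    norm_num
  have hexp : exp 0.2116 ≤ 1.2356545 := by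
    have := Real.exp_bound' (x := 0.2116) (by norm_num) (by norm_num) (n := 5) (by norm_num)
    norm_num [Finset.sum_range_succ, Nat.factorial] at this
    linarith
  rw [hpow, le_inv_comm₀ (by norm_num) (by positivity)]
  calc exp 0.2116 ^ 4 ≤ 1.2356545 ^ 4 := pow_le_pow_left₀ (exp_pos _).le hexp 4
    _ ≤ 0.4285⁻¹ := by norm_num

lemma abs_besselJ0_le_of_le_three {t : ℝ} (ht : 1.84 ≤ t) (ht₃ : t ≤ 3) :
    |besselJ0 t| ≤ 0.4285 := by
  have ht₀ : 0 ≤ t := by linarith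
  have hlower := besselJ0_alternating (n := 4) (by norm_num) ht₀
  have hupper := besselJ0_alternating (n := 5) (by norm_num) ht₀
  simp only [besselJ0Partial, Finset.sum_range_succ, Nat.factorial, pow_mul] at hlower hupper
  norm_num at hlower hupper
  obtain ⟨w, hw⟩ : ∃ w, w = t ^ 2 := ⟨_, rfl⟩
  have hw₁ : 3.3856 ≤ w := by nlinarith
  have hw₂ : w ≤ 9 := by nlinarith
  simp only [div_pow, ← hw] at hlower hupper
  rw [abs_le]
  constructor
  · have : 0 ≤ (9 - w) * ((w - 6) ^ 2 + 1) :=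
      mul_nonneg (by linarith) (by positivity)
    nlinarith [sq_nonneg (w - 6)]
  · have h₁ := sub_nonneg.2 hw₁
    have h₂ := sub_nonneg.2 hw₂
    nlinarith [mul_nonneg h₁ h₂, mul_nonneg (mul_nonneg h₁ h₂) h₂, mul_nonneg (mul_nonneg h₁ h₂) h₁,
      sq_nonneg (w - 6)]

lemma besselJ0_three_sq_add_besselJ1_three_sq_le :
    besselJ0 3 ^ 2 + besselJ1 3 ^ 2 ≤ 0.4285 ^ 2 := by
  have h₀ : (0 : ℝ) ≤ 3 := by norm_num
  have hJ0 := besselJ0_alternating (n := 6) (by norm_num) h₀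
  have hJ0' := besselJ0_alternating (n := 5) (by norm_num) h₀
  have hJ1 := besselJ1_alternating (n := 4) (by norm_num) h₀
  have hJ1' := besselJ1_alternating (n := 5) (by norm_num) h₀
  simp only [besselJ0Partial, besselJ1Partial, Finset.sum_range_succ, Nat.factorial]
    at hJ0 hJ0' hJ1 hJ1'
  norm_num at hJ0 hJ0' hJ1 hJ1'
  have hJ0sq : besselJ0 3 ^ 2 ≤ 0.2603 ^ 2 := sq_le_sq' (by linarith) (by linarith)
  have hJ1sq : besselJ1 3 ^ 2 ≤ 0.34003 ^ 2 := sq_le_sq' (by linarith) (by linarith)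
  linarith

lemma abs_besselJ0_le_besselTailBound {t : ℝ} (ht : 1.84 ≤ t) :
    |besselJ0 t| ≤ besselTailBound := by
  refine le_trans ?_ le_besselTailBound
  rcases le_total t 3 with ht₃ | ht₃
  · exact abs_besselJ0_le_of_le_three ht ht₃
  · refine abs_le_of_sq_le_sq ?_ (by norm_num)
    calc besselJ0 t ^ 2 ≤ besselJ0 t ^ 2 + besselJ1 t ^ 2 :=
          le_add_of_nonneg_right (sq_nonneg _)
      _ ≤ besselJ0 3 ^ 2 + besselJ1 3 ^ 2 :=
          antitoneOn_besselJ0_sq_add_besselJ1_sq (by norm_num) (Set.mem_Ioi.2 (by linarith)) ht₃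
      _ ≤ 0.4285 ^ 2 := besselJ0_three_sq_add_besselJ1_three_sq_le

end Bessel

/-! ### Haagerup's integral -/

/-- Convergence of the integral defining `haagerupIntegral`. -/
def HaagerupIntegrable (f : ℝ → ℝ) : Prop :=
  IntegrableOn (fun t => (1 - f t) / t ^ 2) (Set.Ioi 0)

/-- Haagerup's integral `∫₀^∞ (1 - f t) / t² dt`. At the characteristic function of a symmetric
real random variable `X` it is `π / 2` times the first absolute moment of `X`. -/
noncomputable def haagerupIntegral (f : ℝ → ℝ) : ℝ :=
  ∫ t in Set.Ioi (0 : ℝ), (1 - f t) / t ^ 2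

section Haagerup

variable {f g : ℝ → ℝ}

lemma HaagerupIntegrable.of_bounds (hf : Measurable f) (hf₁ : ∀ t, |f t| ≤ 1) {C : ℝ}
    (hC : ∀ t, 0 ≤ t → 1 - f t ≤ C * t ^ 2) : HaagerupIntegrable f := by
  refine Integrable.mono' (integrable_inv_one_add_sq.const_mul (C + 2)).integrableOn
    (Measurable.aestronglyMeasurable (by fun_prop)) ?_
  refine (ae_restrict_iff' measurableSet_Ioi).2 (.of_forall fun t ht => ?_)
  have ht₀ : (0 : ℝ) < t := ht
  obtain ⟨hlower, hupper⟩ := abs_le.1 (hf₁ t)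
  rw [Real.norm_of_nonneg (div_nonneg (by linarith) (sq_nonneg t)), ← div_eq_mul_inv,
    div_le_div_iff₀ (by positivity) (by positivity)]
  nlinarith [hC t ht₀.le, sq_nonneg t]

lemma haagerupIntegral_le_of_le (hf : HaagerupIntegrable f) (hg : HaagerupIntegrable g)
    (hfg : ∀ t, 0 < t → f t ≤ g t) : haagerupIntegral g ≤ haagerupIntegral f :=
  setIntegral_mono_on hg hf measurableSet_Ioi fun t ht => by
    have := hfg t ht
    gcongr

lemma one_sub_comp_mul_div_sq (f : ℝ → ℝ) {b : ℝ} (hb : 0 < b) (t : ℝ) :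
    (1 - f (b * t)) / t ^ 2 = b ^ 2 * ((1 - f (b * t)) / (b * t) ^ 2) := by
  rcases eq_or_ne t 0 with rfl | ht
  · simp
  · field_simp

lemma HaagerupIntegrable.comp_mul (hf : HaagerupIntegrable f) {b : ℝ} (hb : 0 < b) :
    HaagerupIntegrable fun t => f (b * t) := by
  have := (integrableOn_Ioi_comp_mul_left_iff (fun t => (1 - f t) / t ^ 2) 0 hb).2
    (by rwa [mul_zero])
  simp only [HaagerupIntegrable, one_sub_comp_mul_div_sq f hb]
  exact this.const_mul _

lemma haagerupIntegral_comp_mul (f : ℝ → ℝ) {b : ℝ} (hb : 0 < b) :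
    haagerupIntegral (fun t => f (b * t)) = b * haagerupIntegral f := by
  have := integral_comp_mul_left_Ioi (fun t => (1 - f t) / t ^ 2) 0 hb
  rw [mul_zero, smul_eq_mul] at this
  simp only [haagerupIntegral, one_sub_comp_mul_div_sq f hb]
  rw [integral_const_mul, this]
  field_simp

lemma one_sub_sum_mul_div_sq {ι : Type*} {s : Finset ι} {w : ι → ℝ} (hw : ∑ j ∈ s, w j = 1)
    (f : ι → ℝ → ℝ) (t : ℝ) :
    (1 - ∑ j ∈ s, w j * f j t) / t ^ 2 = ∑ j ∈ s, w j * ((1 - f j t) / t ^ 2) := by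
  nth_rw 1 [← hw]
  rw [← Finset.sum_sub_distrib, Finset.sum_div]
  exact Finset.sum_congr rfl fun j _ => by ring

section Sum

variable {ι : Type*} {s : Finset ι} {w : ι → ℝ} {f : ι → ℝ → ℝ}

lemma HaagerupIntegrable.sum_mul (hw : ∑ j ∈ s, w j = 1)
    (hf : ∀ j ∈ s, HaagerupIntegrable (f j)) :
    HaagerupIntegrable fun t => ∑ j ∈ s, w j * f j t := by
  simp only [HaagerupIntegrable, one_sub_sum_mul_div_sq hw]
  exact integrable_finsetSum _ fun j hj => (hf j hj).const_mul _

lemma haagerupIntegral_sum_mul (hw : ∑ j ∈ s, w j = 1)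
    (hf : ∀ j ∈ s, HaagerupIntegrable (f j)) :
    haagerupIntegral (fun t => ∑ j ∈ s, w j * f j t) = ∑ j ∈ s, w j * haagerupIntegral (f j) := by
  simp only [haagerupIntegral, one_sub_sum_mul_div_sq hw, ← integral_const_mul]
  exact integral_finsetSum _ fun j hj => (hf j hj).const_mul _

end Sum

end Haagerup

lemma haagerupIntegrable_cos : HaagerupIntegrable cos :=
  .of_bounds (C := 1 / 2) (by fun_prop) abs_cos_le_one
    fun t _ => by linarith [one_sub_sq_div_two_le_cos (x := t)]

lemma cos_mul_eq_cos_abs_mul (x : ℝ) : (fun t => cos (x * t)) = fun t => cos (|x| * t) := by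
  rcases abs_choice x with h | h <;> simp [h]

lemma haagerupIntegrable_cos_mul (x : ℝ) : HaagerupIntegrable fun t => cos (x * t) := by
  rcases eq_or_ne x 0 with rfl | hx
  · simp [HaagerupIntegrable]
  · rw [cos_mul_eq_cos_abs_mul]
    exact haagerupIntegrable_cos.comp_mul (abs_pos.2 hx)

lemma haagerupIntegral_cos_mul (x : ℝ) :
    haagerupIntegral (fun t => cos (x * t)) = |x| * haagerupIntegral cos := by
  rcases eq_or_ne x 0 with rfl | hx
  · simp [haagerupIntegral]
  · rw [cos_mul_eq_cos_abs_mul, haagerupIntegral_comp_mul _ (abs_pos.2 hx)]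

section Fubini

variable {Ω : Type*} [MeasurableSpace Ω] {μ : Measure Ω} {X : Ω → ℝ}

lemma one_sub_integral_cos_div_sq [IsProbabilityMeasure μ] (hX : Measurable X) (t : ℝ) :
    (1 - ∫ ω, cos (X ω * t) ∂μ) / t ^ 2 = ∫ ω, (1 - cos (X ω * t)) / t ^ 2 ∂μ := by
  have hcos : Integrable (fun ω => cos (X ω * t)) μ :=
    .of_bound (Measurable.aestronglyMeasurable (by fun_prop)) 1
      (.of_forall fun ω => abs_cos_le_one _)
  rw [integral_div, integral_sub (integrable_const _) hcos, integral_const, probReal_univ,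
    one_smul]

lemma integrable_one_sub_cos_div_sq [SFinite μ] (hX : Measurable X)
    (hXi : Integrable X μ) :
    Integrable (fun p : Ω × ℝ => (1 - cos (X p.1 * p.2)) / p.2 ^ 2)
      (μ.prod (volume.restrict (Set.Ioi 0))) := by
  rw [integrable_prod_iff (Measurable.aestronglyMeasurable (by fun_prop))]
  refine ⟨.of_forall fun ω => haagerupIntegrable_cos_mul (X ω), ?_⟩
  have hnorm (ω : Ω) (t : ℝ) :
      ‖(1 - cos (X ω * t)) / t ^ 2‖ = (1 - cos (X ω * t)) / t ^ 2 :=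
    Real.norm_of_nonneg (div_nonneg (sub_nonneg.2 (cos_le_one _)) (sq_nonneg t))
  have hinner (ω : Ω) : ∫ t in Set.Ioi (0 : ℝ), (1 - cos (X ω * t)) / t ^ 2 =
      |X ω| * haagerupIntegral cos := haagerupIntegral_cos_mul (X ω)
  simp only [hnorm, hinner]
  exact hXi.abs.mul_const _

lemma haagerupIntegrable_integral_cos [IsProbabilityMeasure μ] (hX : Measurable X)
    (hXi : Integrable X μ) :
    HaagerupIntegrable fun t => ∫ ω, cos (X ω * t) ∂μ := by
  simp only [HaagerupIntegrable, one_sub_integral_cos_div_sq hX]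
  exact (integrable_one_sub_cos_div_sq hX hXi).integral_prod_right

lemma haagerupIntegral_integral_cos [IsProbabilityMeasure μ] (hX : Measurable X)
    (hXi : Integrable X μ) :
    haagerupIntegral (fun t => ∫ ω, cos (X ω * t) ∂μ) =
      (∫ ω, |X ω| ∂μ) * haagerupIntegral cos := by
  rw [haagerupIntegral, ← integral_mul_const]
  simp only [one_sub_integral_cos_div_sq hX]
  rw [← integral_integral_swap (f := fun ω t => (1 - cos (X ω * t)) / t ^ 2)
    (integrable_one_sub_cos_div_sq hX hXi)]
  exact integral_congr_ae (.of_forall fun ω => haagerupIntegral_cos_mul (X ω))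

end Fubini

section Gaussian

variable {s : ℝ}

lemma one_sub_exp_neg_mul_sq_le (s t : ℝ) : 1 - exp (-s * t ^ 2) ≤ s * t ^ 2 := by
  linarith [add_one_le_exp (-s * t ^ 2)]

lemma exp_neg_mul_sq_le_one (hs : 0 ≤ s) (t : ℝ) : exp (-s * t ^ 2) ≤ 1 :=
  exp_le_one_iff.2 (by nlinarith [sq_nonneg t])

lemma haagerupIntegrable_gaussian (hs : 0 ≤ s) :
    HaagerupIntegrable fun t => exp (-s * t ^ 2) :=
  .of_bounds (by fun_prop)
    (fun t => (abs_of_pos (exp_pos _)).trans_le (exp_neg_mul_sq_le_one hs t))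
    fun t _ => one_sub_exp_neg_mul_sq_le s t

lemma hasDerivAt_one_sub_gaussian_div (s : ℝ) {t : ℝ} (ht : t ≠ 0) :
    HasDerivAt (fun t => (1 - exp (-s * t ^ 2)) / t)
      (2 * s * exp (-s * t ^ 2) - (1 - exp (-s * t ^ 2)) / t ^ 2) t := by
  refine ((((((hasDerivAt_id t).pow 2).const_mul (-s)).exp).const_sub 1).div
    (hasDerivAt_id t) ht).congr_deriv ?_
  simp only [Pi.pow_apply, id_eq]
  field_simp
  ring

/- The value at `0` is the junk value `0 / 0 = 0`, which happens to be the limit. -/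
lemma continuousWithinAt_one_sub_gaussian_div (hs : 0 ≤ s) :
    ContinuousWithinAt (fun t => (1 - exp (-s * t ^ 2)) / t) (Set.Ici 0) 0 := by
  rw [← continuousWithinAt_Ioi_iff_Ici, ContinuousWithinAt, div_zero]
  have hlim : Filter.Tendsto (fun t : ℝ => s * t) (nhdsWithin 0 (Set.Ioi 0)) (nhds 0) := by
    simpa using ((continuous_const_mul s).tendsto 0).mono_left nhdsWithin_le_nhds
  refine tendsto_of_tendsto_of_tendsto_of_le_of_le' tendsto_const_nhds hlim ?_ ?_ <;>
    filter_upwards [self_mem_nhdsWithin] with t (ht : 0 < t)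
  · exact div_nonneg (sub_nonneg.2 (exp_neg_mul_sq_le_one hs t)) ht.le
  · rw [div_le_iff₀ ht, mul_assoc, ← sq]
    exact one_sub_exp_neg_mul_sq_le s t

lemma tendsto_one_sub_gaussian_div_atTop (hs : 0 ≤ s) :
    Filter.Tendsto (fun t => (1 - exp (-s * t ^ 2)) / t) Filter.atTop (nhds 0) := by
  refine tendsto_of_tendsto_of_tendsto_of_le_of_le' tendsto_const_nhds tendsto_inv_atTop_zero
    ?_ ?_ <;> filter_upwards [Filter.eventually_gt_atTop 0] with t ht
  · exact div_nonneg (sub_nonneg.2 (exp_neg_mul_sq_le_one hs t)) ht.le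
  · rw [← one_div]
    have := exp_pos (-s * t ^ 2)
    gcongr
    linarith

lemma haagerupIntegral_gaussian (hs : 0 < s) :
    haagerupIntegral (fun t => exp (-s * t ^ 2)) = √(π * s) := by
  have hI := haagerupIntegrable_gaussian hs.le
  have hG : IntegrableOn (fun t => 2 * s * exp (-s * t ^ 2)) (Set.Ioi 0) :=
    ((integrable_exp_neg_mul_sq hs).const_mul _).integrableOn
  have hparts := integral_Ioi_of_hasDerivAt_of_tendsto
    (continuousWithinAt_one_sub_gaussian_div hs.le)
    (fun t ht => hasDerivAt_one_sub_gaussian_div s (ne_of_gt ht)) (hG.sub hI)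
    (tendsto_one_sub_gaussian_div_atTop hs.le)
  rw [integral_sub hG hI, integral_const_mul, integral_gaussian_Ioi, div_zero, sub_zero,
    sub_eq_zero] at hparts
  calc haagerupIntegral (fun t => exp (-s * t ^ 2)) = s * √(π / s) := by
        rw [haagerupIntegral, ← hparts]
        ring
    _ = √(π * s) := by
        rw [← Real.sqrt_sq hs.le, ← Real.sqrt_mul (sq_nonneg s), Real.sqrt_sq hs.le]
        congr 1
        field_simp

end Gaussian

open ProbabilityTheory in
lemma integral_cos_mul_gaussianReal (t : ℝ) :
    ∫ x, cos (x * t) ∂(gaussianReal 0 1) = exp (-(1 / 2) * t ^ 2) := by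
  have hchar := congrArg Complex.re (charFun_gaussianReal (μ := 0) (v := 1) t)
  have hre (x : ℝ) : (Complex.exp (t * x * Complex.I)).re = cos (x * t) := by
    rw [← Complex.ofReal_mul, Complex.exp_ofReal_mul_I_re, mul_comm]
  have hint : Integrable (fun x : ℝ => Complex.exp (t * x * Complex.I)) (gaussianReal 0 1) := by
    refine .of_bound (by fun_prop) 1 (.of_forall fun x => ?_)
    rw [← Complex.ofReal_mul, Complex.norm_exp_ofReal_mul_I]
  have hexponent : (t * (0 : ℝ) * Complex.I - (1 : NNReal) * t ^ 2 / 2 : ℂ) =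
      ((-(1 / 2) * t ^ 2 : ℝ) : ℂ) := by
    push_cast
    ring
  rw [charFun_apply_real, ← RCLike.re_eq_complex_re, ← integral_re hint, hexponent,
    RCLike.re_eq_complex_re, Complex.exp_ofReal_re] at hchar
  simpa only [RCLike.re_eq_complex_re, hre] using hchar

open ProbabilityTheory in
lemma integral_abs_gaussianReal : ∫ x, |x| ∂(gaussianReal 0 1) = √(2 / π) := by
  have hdensity (x : ℝ) : gaussianPDFReal 0 1 x • |x| =
      (√(2 * π))⁻¹ * (|x| ^ (1 : ℝ) * exp (-(1 / 2) * |x| ^ (2 : ℝ))) := by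
    simp only [gaussianPDFReal, NNReal.coe_one, mul_one, sub_zero, smul_eq_mul, rpow_one,
      rpow_ofNat, sq_abs]
    ring_nf
  rw [integral_gaussianReal_eq_integral_smul one_ne_zero]
  simp only [hdensity]
  rw [integral_comp_abs (f := fun y => (√(2 * π))⁻¹ * (y ^ (1 : ℝ) *
      exp (-(1 / 2) * y ^ (2 : ℝ)))), integral_const_mul,
    integral_rpow_mul_exp_neg_mul_rpow (by norm_num) (by norm_num) (by norm_num)]
  have hpow : ((1 / 2 : ℝ)) ^ (-((1 : ℝ) + 1) / 2) = 2 := by norm_num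
  have hGamma : Gamma ((1 + 1) / 2) = 1 := by norm_num
  rw [hpow, hGamma, Real.sqrt_mul zero_le_two, Real.sqrt_div zero_le_two]
  field_simp
  rw [Real.sq_sqrt zero_le_two]

lemma haagerupIntegral_cos : haagerupIntegral cos = π / 2 := by
  have hint : Integrable (fun x : ℝ => x) (ProbabilityTheory.gaussianReal 0 1) :=
    memLp_one_iff_integrable.1 (ProbabilityTheory.memLp_id_gaussianReal 1)
  have hgauss := haagerupIntegral_integral_cos measurable_id hint
  simp only [id_eq, integral_cos_mul_gaussianReal, integral_abs_gaussianReal] at hgauss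
  rw [haagerupIntegral_gaussian (by norm_num)] at hgauss
  have hsqrt : √(π * (1 / 2)) = √(2 / π) * (π / 2) := by
    rw [← Real.sqrt_sq (show 0 ≤ π / 2 by positivity), ← Real.sqrt_mul (by positivity)]
    congr 1
    field_simp
  rw [hsqrt] at hgauss
  exact (mul_left_cancel₀ (by positivity) hgauss).symm

/-! ### The first absolute moment of a Steinhaus sum -/

lemma periodic_abs_cos : Function.Periodic (fun θ => |cos θ|) π := fun θ => by
  simp only [cos_antiperiodic θ, abs_neg]

lemma integral_abs_cos : ∫ θ in (0 : ℝ)..π, |cos θ| = 2 := by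
  have hshift := periodic_abs_cos.intervalIntegral_add_eq 0 (-(π / 2))
  rw [zero_add, show -(π / 2) + π = π / 2 by ring] at hshift
  rw [hshift, intervalIntegral.integral_congr (g := cos)]
  · rw [integral_cos, sin_neg, sin_pi_div_two]
    norm_num
  · intro θ hθ
    rw [Set.uIcc_of_le (by linarith [pi_pos])] at hθ
    exact abs_of_nonneg (cos_nonneg_of_mem_Icc hθ)

lemma integral_abs_re_expi : ∫ x, |(expi x).re| ∂phaseMeasure = 2 / π := by
  have hint (a b : ℝ) : IntervalIntegrable (fun θ => |cos θ|) volume a b :=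
    Continuous.intervalIntegrable (by fun_prop) a b
  have htwo := periodic_abs_cos.intervalIntegral_add_eq π 0
  rw [← two_mul, zero_add] at htwo
  rw [integral_comp_re_expi, ← intervalIntegral.integral_add_adjacent_intervals (hint 0 π)
    (hint π (2 * π)), htwo, integral_abs_cos]
  field_simp
  norm_num

lemma integral_abs_re_mul_expi (z : ℂ) : ∫ x, |(z * expi x).re| ∂phaseMeasure = 2 / π * ‖z‖ := by
  rw [integral_comp_mul_expi fun w => |w.re|]
  simp only [Complex.re_ofReal_mul, abs_mul, abs_norm]
  rw [integral_const_mul, integral_abs_re_expi, mul_comm]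

lemma norm_one_add_exp_mul_I (θ : ℝ) : ‖1 + Complex.exp (θ * Complex.I)‖ = 2 * |cos (θ / 2)| := by
  have hfactor : 1 + Complex.exp (θ * Complex.I) =
      Complex.exp ((θ / 2 : ℝ) * Complex.I) * ((2 * cos (θ / 2) : ℝ) : ℂ) := by
    push_cast
    rw [Complex.two_cos, mul_add, ← Complex.exp_add, ← Complex.exp_add, ← add_mul, add_halves,
      ← add_mul, add_neg_cancel, zero_mul, Complex.exp_zero, add_comm]
  rw [hfactor, norm_mul, Complex.norm_exp_ofReal_mul_I, one_mul, Complex.norm_real,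
    Real.norm_eq_abs, abs_mul, abs_two]

lemma integral_norm_one_add_expi : ∫ x, ‖1 + expi x‖ ∂phaseMeasure = 4 / π := by
  rw [integral_phase fun x => ‖1 + expi x‖]
  simp only [expi_coe, norm_one_add_exp_mul_I]
  rw [intervalIntegral.integral_const_mul,
    intervalIntegral.integral_comp_div (fun θ => |cos θ|) two_ne_zero, zero_div,
    mul_div_cancel_left₀ π two_ne_zero, integral_abs_cos, smul_eq_mul, smul_eq_mul]
  field_simp
  norm_num

lemma integral_cos_re_add_mul_expi (v b : ℂ) (t : ℝ) :
    ∫ x, cos ((v + b * expi x).re * t) ∂phaseMeasure = cos (v.re * t) * besselJ0 (‖b‖ * t) := by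
  have hsin : ∫ x, sin ((b * expi x).re * t) ∂phaseMeasure = 0 := by
    have hneg := integral_comp_mul_expi (fun w => sin (w.re * t)) (-b)
    rw [norm_neg, ← integral_comp_mul_expi (fun w => sin (w.re * t)) b] at hneg
    simp only [neg_mul, Complex.neg_re, sin_neg] at hneg
    rw [integral_neg] at hneg
    linarith
  have hcos : ∫ x, cos ((b * expi x).re * t) ∂phaseMeasure = besselJ0 (‖b‖ * t) := by
    rw [integral_comp_mul_expi fun w => cos (w.re * t)]
    simp only [besselJ0, Complex.re_ofReal_mul, mul_right_comm]
  simp only [Complex.add_re, add_mul, cos_add]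
  rw [integral_sub (integrable_of_continuous (by fun_prop))
    (integrable_of_continuous (by fun_prop)), integral_const_mul, integral_const_mul, hsin, hcos,
    mul_zero, sub_zero]

@[fun_prop]
lemma continuous_re_steinhausSum {ι : Type*} (s : Finset ι) (a : ι → ℂ) :
    Continuous fun ω => (steinhausSum s a ω).re :=
  Complex.continuous_re.comp (by fun_prop)

section Representation

variable {ι : Type*} [Fintype ι] (s : Finset ι) (a : ι → ℂ)

lemma integral_cos_re_steinhausSum (t : ℝ) :
    ∫ ω, cos ((steinhausSum s a ω).re * t) ∂(steinhausMeasure ι) =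
      ∏ j ∈ s, besselJ0 (‖a j‖ * t) := by
  classical
  induction s using Finset.induction_on with
  | empty => simp [steinhausSum]
  | insert j s hj ih =>
    rw [integral_steinhausSum_insert hj a (G := fun z => cos (z.re * t)) (by fun_prop)]
    simp only [integral_cos_re_add_mul_expi]
    rw [integral_mul_const, ih, Finset.prod_insert hj, mul_comm]

lemma integral_abs_re_steinhausSum :
    ∫ ω, |(steinhausSum s a ω).re| ∂(steinhausMeasure ι) =
      2 / π * ∫ ω, ‖steinhausSum s a ω‖ ∂(steinhausMeasure ι) := by
  rw [integral_steinhaus_rotate (g := fun φ _ => φ) (by fun_prop) (by fun_prop),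
    ← integral_const_mul]
  congr! 2
  rw [← integral_abs_re_mul_expi]
  simp only [steinhausSum, Pi.add_apply, expi_add, Finset.sum_mul, mul_assoc]

lemma haagerupIntegral_prod_besselJ0 :
    haagerupIntegral (fun t => ∏ j ∈ s, besselJ0 (‖a j‖ * t)) =
      ∫ ω, ‖steinhausSum s a ω‖ ∂(steinhausMeasure ι) := by
  simp only [← integral_cos_re_steinhausSum]
  have hcont := continuous_re_steinhausSum s a
  rw [haagerupIntegral_integral_cos hcont.measurable (integrable_of_continuous hcont),
    integral_abs_re_steinhausSum, haagerupIntegral_cos]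
  field_simp

end Representation

lemma haagerupIntegrable_prod_besselJ0 {ι : Type*} [Finite ι] (s : Finset ι) (a : ι → ℂ) :
    HaagerupIntegrable fun t => ∏ j ∈ s, besselJ0 (‖a j‖ * t) := by
  cases nonempty_fintype ι
  simp only [← integral_cos_re_steinhausSum]
  have hcont := continuous_re_steinhausSum s a
  exact haagerupIntegrable_integral_cos hcont.measurable (integrable_of_continuous hcont)

lemma integral_norm_steinhausSum_fin_two :
    ∫ ω, ‖steinhausSum Finset.univ (fun _ : Fin 2 => 1) ω‖ ∂(steinhausMeasure (Fin 2)) =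
      4 / π := by
  have huniv : (Finset.univ : Finset (Fin 2)) = insert 1 {0} := by decide
  rw [huniv, integral_steinhausSum_insert (by decide) _ (G := fun z => ‖z‖) continuous_norm]
  have hpair (ω : Fin 2 → Phase) :
      ∫ x, ‖steinhausSum {0} (fun _ : Fin 2 => 1) ω + 1 * expi x‖ ∂phaseMeasure = 4 / π := by
    rw [integral_norm_add_mul_expi, steinhausSum, Finset.sum_singleton, norm_mul_expi, norm_one,
      Complex.ofReal_one]
    simp only [one_mul, integral_norm_one_add_expi]
  simp only [hpair, integral_const, probReal_univ, one_smul]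

lemma haagerupIntegrable_besselJ0_sq : HaagerupIntegrable fun t => besselJ0 t ^ 2 := by
  simpa using haagerupIntegrable_prod_besselJ0 Finset.univ fun _ : Fin 2 => 1

lemma haagerupIntegral_besselJ0_sq : haagerupIntegral (fun t => besselJ0 t ^ 2) = 4 / π := by
  simpa [integral_norm_steinhausSum_fin_two] using
    haagerupIntegral_prod_besselJ0 Finset.univ fun _ : Fin 2 => 1

/-! ### Steinhaus sums with small coefficients -/

/-- An upper bound for `∫ v in u..∞, exp (-v² / 2) / v² dv` when `2 ≤ u²`. -/
noncomputable def gaussianTail (u : ℝ) : ℝ := exp (-(1 / 2) * u ^ 2) / (u * (u ^ 2 + 2))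

lemma hasDerivAt_neg_gaussianTail {u : ℝ} (hu : u ≠ 0) :
    HasDerivAt (fun u => -gaussianTail u)
      (exp (-(1 / 2) * u ^ 2) * ((u ^ 4 + 5 * u ^ 2 + 2) / (u ^ 2 * (u ^ 2 + 2) ^ 2))) u := by
  have hu₂ : u * (u ^ 2 + 2) ≠ 0 := mul_ne_zero hu (by positivity)
  refine ((((((hasDerivAt_id u).pow 2).const_mul (-(1 / 2))).exp).div
    ((hasDerivAt_id u).mul (((hasDerivAt_id u).pow 2).add_const 2)) hu₂).neg).congr_deriv ?_
  simp only [Pi.mul_apply, Pi.pow_apply, id_eq]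
  field_simp
  ring

lemma tendsto_neg_gaussianTail :
    Filter.Tendsto (fun u => -gaussianTail u) Filter.atTop (nhds 0) := by
  rw [← neg_zero]
  refine (tendsto_of_tendsto_of_tendsto_of_le_of_le' tendsto_const_nhds tendsto_inv_atTop_zero
    ?_ ?_).neg <;> filter_upwards [Filter.eventually_gt_atTop 0] with u hu
  · unfold gaussianTail
    positivity
  · rw [gaussianTail, ← one_div]
    exact div_le_div₀ zero_le_one (exp_neg_mul_sq_le_one (by norm_num) u) hu
      (by nlinarith [sq_nonneg u])

lemma setIntegral_gaussian_div_sq_le {u : ℝ} (hu : 0 < u) (hu₂ : 2 ≤ u ^ 2) :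
    ∫ v in Set.Ioi u, exp (-(1 / 2) * v ^ 2) / v ^ 2 ≤ gaussianTail u := by
  have hderiv (v : ℝ) (hv : v ∈ Set.Ici u) :=
    hasDerivAt_neg_gaussianTail (hu.trans_le hv).ne'
  have hint := integrableOn_Ioi_deriv_of_nonneg' hderiv (fun v _ => by positivity)
    tendsto_neg_gaussianTail
  have hval := integral_Ioi_of_hasDerivAt_of_tendsto' hderiv hint tendsto_neg_gaussianTail
  rw [zero_sub, neg_neg] at hval
  rw [← hval]
  refine setIntegral_mono_of_nonneg (fun v _ => by positivity) (fun v hv => ?_) hint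
  have hv₂ : u ^ 2 ≤ v ^ 2 := pow_le_pow_left₀ hu.le (le_of_lt hv) 2
  have hv₀ : 0 < v := hu.trans hv
  rw [div_eq_mul_one_div]
  refine mul_le_mul_of_nonneg_left ?_ (exp_pos _).le
  rw [div_le_div_iff₀ (by positivity) (by positivity)]
  nlinarith

lemma gaussianTail_le : gaussianTail 1.84 ≤ 0.0199 := by
  have hexp : 5.08 ≤ exp 1.6928 := by
    have hquad := quadratic_le_exp_of_nonneg (x := 0.2116) (by norm_num)
    calc (5.08 : ℝ) ≤ 1.2339 ^ 8 := by norm_num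
      _ ≤ exp 0.2116 ^ 8 := pow_le_pow_left₀ (by norm_num) (by linarith) 8
      _ = exp 1.6928 := by rw [← exp_nat_mul]; norm_num
  have hinv : exp (-1.6928) ≤ 5.08⁻¹ := by
    rw [exp_neg]
    exact inv_anti₀ (by norm_num) hexp
  rw [gaussianTail, div_le_iff₀ (by norm_num)]
  norm_num at hinv ⊢
  linarith

/-- The Gaussian `exp (-u² / 2)`, which majorizes `J₀²` on `[0, 1.84]`, set to zero beyond. -/
noncomputable def truncatedGaussian : ℝ → ℝ :=
  (Set.Iic (1.84 : ℝ)).indicator fun u => exp (-(1 / 2) * u ^ 2)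

lemma haagerupIntegrable_truncatedGaussian : HaagerupIntegrable truncatedGaussian := by
  refine .of_bounds (C := 1) (Measurable.indicator (by fun_prop) measurableSet_Iic)
    (fun u => ?_) fun u _ => ?_ <;>
  rcases le_or_gt u 1.84 with hu | hu
  · rw [truncatedGaussian, Set.indicator_of_mem (Set.mem_Iic.2 hu), abs_exp]
    exact exp_neg_mul_sq_le_one (by norm_num) u
  · simp [truncatedGaussian, hu]
  · rw [truncatedGaussian, Set.indicator_of_mem (Set.mem_Iic.2 hu)]
    nlinarith [one_sub_exp_neg_mul_sq_le (1 / 2) u, sq_nonneg u]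
  · rw [truncatedGaussian, Set.indicator_of_notMem (Set.notMem_Iic.2 hu)]
    nlinarith

lemma haagerupIntegral_truncatedGaussian_le :
    haagerupIntegral truncatedGaussian ≤ 4 / π := by
  have hdiff (u : ℝ) : (1 - truncatedGaussian u) / u ^ 2 - (1 - exp (-(1 / 2) * u ^ 2)) / u ^ 2 =
      (Set.Ioi (1.84 : ℝ)).indicator (fun u => exp (-(1 / 2) * u ^ 2) / u ^ 2) u := by
    rcases le_or_gt u 1.84 with hu | hu
    · rw [truncatedGaussian, Set.indicator_of_mem (Set.mem_Iic.2 hu),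
        Set.indicator_of_notMem (Set.notMem_Ioi.2 hu), sub_self]
    · rw [truncatedGaussian, Set.indicator_of_notMem (Set.notMem_Iic.2 hu),
        Set.indicator_of_mem (Set.mem_Ioi.2 hu)]
      ring
  have htail : haagerupIntegral truncatedGaussian - √(π * (1 / 2)) ≤ 0.0199 := by
    rw [← haagerupIntegral_gaussian (by norm_num), haagerupIntegral, haagerupIntegral,
      ← integral_sub haagerupIntegrable_truncatedGaussian
        (haagerupIntegrable_gaussian (by norm_num))]
    simp only [hdiff]
    rw [setIntegral_indicator measurableSet_Ioi,
      Set.inter_eq_self_of_subset_right (Set.Ioi_subset_Ioi (by norm_num))]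
    exact (setIntegral_gaussian_div_sq_le (by norm_num) (by norm_num)).trans gaussianTail_le
  have hsqrt : √(π * (1 / 2)) ≤ 1.25332 := by
    rw [Real.sqrt_le_left (by norm_num)]
    linarith [pi_lt_d6]
  have hpi : 1.27323 ≤ 4 / π := by
    rw [le_div_iff₀ pi_pos]
    linarith [pi_lt_d6]
  linarith

section Powers

variable {s : ℝ}

lemma rpow_le_rpow_sub_two_mul_sq {x y : ℝ} (hx : 0 ≤ x) (hxy : x ≤ y) (hs : 2 ≤ s) :
    x ^ s ≤ y ^ (s - 2) * x ^ 2 := by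
  calc x ^ s = x ^ (s - 2) * x ^ 2 := by
        rw [← rpow_natCast x 2, ← rpow_add_of_nonneg hx (by linarith) (by norm_num)]
        norm_num
    _ ≤ y ^ (s - 2) * x ^ 2 := by gcongr

lemma rpow_sub_two_mul_sq_sub_sq_le {m x y : ℝ} (hm : 0 ≤ m) (hmy : m ≤ y) (hx : 0 ≤ x)
    (hxy : x ≤ y) (hs : 2 ≤ s) : m ^ (s - 2) * (y ^ 2 - x ^ 2) ≤ y ^ s - x ^ s := by
  have hsq : 0 ≤ y ^ 2 - x ^ 2 := sub_nonneg.2 (pow_le_pow_left₀ hx hxy 2)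
  calc m ^ (s - 2) * (y ^ 2 - x ^ 2) ≤ y ^ (s - 2) * (y ^ 2 - x ^ 2) := by
        gcongr
    _ = y ^ (s - 2) * y ^ 2 - y ^ (s - 2) * x ^ 2 := mul_sub _ _ _
    _ ≤ y ^ s - x ^ s := by
        refine sub_le_sub (le_of_eq ?_) (rpow_le_rpow_sub_two_mul_sq hx hxy hs)
        rw [← rpow_natCast y 2, ← rpow_add_of_nonneg (hm.trans hmy) (by linarith) (by norm_num)]
        norm_num

lemma besselTailBound_rpow_mul_sub_le (hs : 2 ≤ s) {u : ℝ} (hu : 0 ≤ u) :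
    besselTailBound ^ (s - 2) * (truncatedGaussian u - besselJ0 u ^ 2) ≤
      exp (-(s / 4) * u ^ 2) - |besselJ0 u| ^ s := by
  rw [← sq_abs (besselJ0 u)]
  rcases le_or_gt u 1.84 with hu' | hu'
  · have hexp (p : ℝ) : exp (-(p / 4) * u ^ 2) = exp (-(u ^ 2 / 4)) ^ p := by
      rw [← exp_mul]
      ring_nf
    have htrunc : truncatedGaussian u = exp (-(u ^ 2 / 4)) ^ 2 := by
      rw [truncatedGaussian, Set.indicator_of_mem (Set.mem_Iic.2 hu'), ← exp_nat_mul]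
      ring_nf
    rw [htrunc, hexp]
    refine rpow_sub_two_mul_sq_sub_sq_le (exp_pos _).le (exp_le_exp.2 ?_) (abs_nonneg _)
      (abs_besselJ0_le_exp hu (by linarith)) hs
    gcongr
  · rw [truncatedGaussian, Set.indicator_of_notMem (Set.notMem_Iic.2 hu'), zero_sub, mul_neg]
    have := rpow_le_rpow_sub_two_mul_sq (abs_nonneg _) (abs_besselJ0_le_besselTailBound hu'.le) hs
    linarith [exp_pos (-(s / 4) * u ^ 2)]

lemma haagerupIntegrable_abs_besselJ0_rpow (hs : 1 ≤ s) :
    HaagerupIntegrable fun u => |besselJ0 u| ^ s := by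
  have hmeas := continuous_besselJ0.measurable
  refine .of_bounds (C := s / 4) (by fun_prop) (fun t => ?_) fun t ht => ?_
  · rw [abs_of_nonneg (by positivity)]
    exact rpow_le_one (abs_nonneg _) (abs_besselJ0_le_one t) (by linarith)
  · have hbernoulli := one_add_mul_self_le_rpow_one_add (s := |besselJ0 t| - 1)
      (by linarith [abs_nonneg (besselJ0 t)]) hs
    rw [add_sub_cancel] at hbernoulli
    nlinarith [one_sub_sq_div_four_le_besselJ0 ht, le_abs_self (besselJ0 t)]

/- `|J₀|^s` and `exp (-s u² / 4)` are compared by way of the case `s = 2`, where both integrals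
are explicit; the sign change of `exp (-u² / 2) - J₀²` is handled by the factor
`besselTailBound ^ (s - 2)`. -/
lemma sqrt_pi_mul_le_haagerupIntegral_abs_besselJ0_rpow (hs : 2 ≤ s) :
    √(π * (s / 4)) ≤ haagerupIntegral fun u => |besselJ0 u| ^ s := by
  have hJ := haagerupIntegrable_abs_besselJ0_rpow (show 1 ≤ s by linarith)
  have hG := haagerupIntegrable_gaussian (show 0 ≤ s / 4 by linarith)
  have hdiff := haagerupIntegrable_besselJ0_sq.sub haagerupIntegrable_truncatedGaussian
  rw [← haagerupIntegral_gaussian (by linarith), ← sub_nonneg]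
  calc 0 ≤ besselTailBound ^ (s - 2) * (haagerupIntegral (fun u => besselJ0 u ^ 2) -
          haagerupIntegral truncatedGaussian) := by
        rw [haagerupIntegral_besselJ0_sq]
        exact mul_nonneg (rpow_nonneg (exp_pos _).le _)
          (sub_nonneg.2 haagerupIntegral_truncatedGaussian_le)
    _ = ∫ u in Set.Ioi (0 : ℝ), besselTailBound ^ (s - 2) *
          ((1 - besselJ0 u ^ 2) / u ^ 2 - (1 - truncatedGaussian u) / u ^ 2) := by
        rw [haagerupIntegral, haagerupIntegral, ← integral_sub haagerupIntegrable_besselJ0_sq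
          haagerupIntegrable_truncatedGaussian, integral_const_mul]
    _ ≤ ∫ u in Set.Ioi (0 : ℝ), ((1 - |besselJ0 u| ^ s) / u ^ 2 -
          (1 - exp (-(s / 4) * u ^ 2)) / u ^ 2) := by
        refine setIntegral_mono_on (hdiff.const_mul _) (hJ.sub hG) measurableSet_Ioi
          fun u hu => ?_
        rw [← sub_div, ← sub_div, ← mul_div_assoc]
        gcongr ?_ / _
        have := besselTailBound_rpow_mul_sub_le hs (le_of_lt hu)
        linarith
    _ = haagerupIntegral (fun u => |besselJ0 u| ^ s) -
          haagerupIntegral (fun u => exp (-(s / 4) * u ^ 2)) := integral_sub hJ hG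

end Powers

section SmallCoefficients

lemma two_le_inv_sq {b : ℝ} (hb : 0 < b) (hb₂ : b ^ 2 ≤ 1 / 2) : 2 ≤ (b ^ 2)⁻¹ := by
  rw [le_inv_comm₀ two_pos (by positivity)]
  linarith

lemma haagerupIntegrable_abs_besselJ0_comp_mul_rpow {b : ℝ} (hb : 0 ≤ b) (hb₂ : b ^ 2 ≤ 1 / 2) :
    HaagerupIntegrable fun t => |besselJ0 (b * t)| ^ (b ^ 2)⁻¹ := by
  rcases hb.eq_or_lt with rfl | hb
  · simp [HaagerupIntegrable]
  · exact (haagerupIntegrable_abs_besselJ0_rpow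
      (one_le_two.trans (two_le_inv_sq hb hb₂))).comp_mul hb

lemma sqrt_pi_le_haagerupIntegral_abs_besselJ0_comp_mul_rpow {b : ℝ} (hb : 0 < b)
    (hb₂ : b ^ 2 ≤ 1 / 2) :
    √π / 2 ≤ haagerupIntegral fun t => |besselJ0 (b * t)| ^ (b ^ 2)⁻¹ := by
  rw [haagerupIntegral_comp_mul (fun u => |besselJ0 u| ^ (b ^ 2)⁻¹) hb]
  refine le_trans (le_of_eq ?_) (mul_le_mul_of_nonneg_left
    (sqrt_pi_mul_le_haagerupIntegral_abs_besselJ0_rpow (two_le_inv_sq hb hb₂)) hb.le)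
  rw [show π * ((b ^ 2)⁻¹ / 4) = π / (b * 2) ^ 2 by field_simp; norm_num,
    Real.sqrt_div pi_pos.le, Real.sqrt_sq (by positivity)]
  field_simp

variable {ι : Type*} {s : Finset ι} {a : ι → ℂ}

lemma prod_besselJ0_le_sum (ha : ∑ j ∈ s, ‖a j‖ ^ 2 = 1) (t : ℝ) :
    ∏ j ∈ s, besselJ0 (‖a j‖ * t) ≤
      ∑ j ∈ s, ‖a j‖ ^ 2 * |besselJ0 (‖a j‖ * t)| ^ (‖a j‖ ^ 2)⁻¹ := by
  have hfactor (j : ι) : |besselJ0 (‖a j‖ * t)| =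
      (|besselJ0 (‖a j‖ * t)| ^ (‖a j‖ ^ 2)⁻¹) ^ ‖a j‖ ^ 2 := by
    rcases eq_or_ne (a j) 0 with hj | hj
    · simp [hj, besselJ0_zero]
    · rw [← rpow_mul (abs_nonneg _), inv_mul_cancel₀ (by positivity), rpow_one]
  calc ∏ j ∈ s, besselJ0 (‖a j‖ * t) ≤ ∏ j ∈ s, |besselJ0 (‖a j‖ * t)| :=
        (le_abs_self _).trans_eq (Finset.abs_prod _ _)
    _ = ∏ j ∈ s, (|besselJ0 (‖a j‖ * t)| ^ (‖a j‖ ^ 2)⁻¹) ^ ‖a j‖ ^ 2 :=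
        Finset.prod_congr rfl fun j _ => hfactor j
    _ ≤ ∑ j ∈ s, ‖a j‖ ^ 2 * |besselJ0 (‖a j‖ * t)| ^ (‖a j‖ ^ 2)⁻¹ :=
        geom_mean_le_arith_mean_weighted s _ _ (fun _ _ => by positivity) ha
          fun _ _ => by positivity

lemma sqrt_pi_div_two_le_integral_norm_of_forall_sq_le [Fintype ι] (ha : ∑ j ∈ s, ‖a j‖ ^ 2 = 1)
    (hsmall : ∀ j ∈ s, ‖a j‖ ^ 2 ≤ 1 / 2) :
    √π / 2 ≤ ∫ ω, ‖steinhausSum s a ω‖ ∂(steinhausMeasure ι) := by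
  have hint (j : ι) (hj : j ∈ s) :=
    haagerupIntegrable_abs_besselJ0_comp_mul_rpow (norm_nonneg (a j)) (hsmall j hj)
  calc √π / 2 = ∑ j ∈ s, ‖a j‖ ^ 2 * (√π / 2) := by rw [← Finset.sum_mul, ha, one_mul]
    _ ≤ ∑ j ∈ s, ‖a j‖ ^ 2 *
          haagerupIntegral (fun t => |besselJ0 (‖a j‖ * t)| ^ (‖a j‖ ^ 2)⁻¹) := by
        refine Finset.sum_le_sum fun j hj => ?_
        rcases (norm_nonneg (a j)).eq_or_lt with h | h
        · simp [← h]
        · have := sqrt_pi_le_haagerupIntegral_abs_besselJ0_comp_mul_rpow h (hsmall j hj)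
          gcongr
    _ = haagerupIntegral fun t =>
          ∑ j ∈ s, ‖a j‖ ^ 2 * |besselJ0 (‖a j‖ * t)| ^ (‖a j‖ ^ 2)⁻¹ :=
        (haagerupIntegral_sum_mul ha hint).symm
    _ ≤ haagerupIntegral fun t => ∏ j ∈ s, besselJ0 (‖a j‖ * t) :=
        haagerupIntegral_le_of_le (haagerupIntegrable_prod_besselJ0 s a) (.sum_mul ha hint)
          fun t _ => prod_besselJ0_le_sum ha t
    _ = ∫ ω, ‖steinhausSum s a ω‖ ∂(steinhausMeasure ι) := haagerupIntegral_prod_besselJ0 s a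

end SmallCoefficients

/-! ### Steinhaus sums with a large coefficient -/

section OneAddMul

/-- The quadratic Taylor polynomial of `√(1 + ρ z)` at `z = 0`. -/
noncomputable def sqrtTaylor (ρ : ℝ) (z : ℂ) : ℂ := 1 + ρ * z / 2 - ρ ^ 2 * z ^ 2 / 8

/-- The non-constant analytic part of `|sqrtTaylor ρ z|²` on the unit circle, where
`|sqrtTaylor ρ z|²` is the sum of a constant and twice the real part of this polynomial. -/
noncomputable def sqrtTaylorCross (ρ : ℝ) (z : ℂ) : ℂ :=
  (ρ / 2 - ρ ^ 3 / 16) * z - ρ ^ 2 / 8 * z ^ 2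

/-- The value of `((1 + ρ z) - P²) * conj P / P` on the unit circle, for `P = sqrtTaylor ρ z`,
extended analytically to the disc by way of `conj z = z⁻¹`. -/
noncomputable def sqrtTaylorError (ρ : ℝ) (z : ℂ) : ℂ :=
  (ρ ^ 3 * z / 8 - ρ ^ 4 * z ^ 2 / 64) * (z ^ 2 + ρ * z / 2 - ρ ^ 2 / 8) / sqrtTaylor ρ z

variable {ρ : ℝ}

lemma sqrtTaylor_ne_zero (hρ₀ : 0 ≤ ρ) (hρ₁ : ρ ≤ 1) {z : ℂ} (hz : ‖z‖ ≤ 1) :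
    sqrtTaylor ρ z ≠ 0 := by
  intro h
  have hone : (1 : ℂ) = ρ ^ 2 * z ^ 2 / 8 - ρ * z / 2 := by
    rw [sqrtTaylor] at h
    linear_combination h
  have hle : (1 : ℝ) ≤ (ρ * ‖z‖) ^ 2 / 8 + ρ * ‖z‖ / 2 := by
    calc (1 : ℝ) = ‖(ρ ^ 2 * z ^ 2 / 8 - ρ * z / 2 : ℂ)‖ := by rw [← hone, norm_one]
      _ ≤ ‖(ρ ^ 2 * z ^ 2 / 8 : ℂ)‖ + ‖(ρ * z / 2 : ℂ)‖ := norm_sub_le _ _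
      _ = (ρ * ‖z‖) ^ 2 / 8 + ρ * ‖z‖ / 2 := by simp [abs_of_nonneg hρ₀, mul_pow]
  have hρz : ρ * ‖z‖ ≤ 1 := mul_le_one₀ hρ₁ (norm_nonneg z) hz
  nlinarith [mul_nonneg hρ₀ (norm_nonneg z)]

lemma diffContOnCl_sqrtTaylorError (hρ₀ : 0 ≤ ρ) (hρ₁ : ρ ≤ 1) :
    DiffContOnCl ℂ (sqrtTaylorError ρ) (Metric.ball 0 1) := by
  refine DifferentiableOn.diffContOnCl fun z hz => ?_
  rw [closure_ball _ one_ne_zero, mem_closedBall_zero_iff] at hz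
  refine (DifferentiableAt.div (by fun_prop) ?_
    (sqrtTaylor_ne_zero hρ₀ hρ₁ hz)).differentiableWithinAt
  unfold sqrtTaylor
  fun_prop

lemma one_add_mul_mul_conj_sqrtTaylor_div {z : ℂ} (hz : ‖z‖ = 1) (hP : sqrtTaylor ρ z ≠ 0) :
    (1 + ρ * z) * (starRingEnd ℂ) (sqrtTaylor ρ z) / sqrtTaylor ρ z =
      (1 + ρ ^ 2 / 4 + ρ ^ 4 / 64 : ℝ) + sqrtTaylorCross ρ z +
        (starRingEnd ℂ) (sqrtTaylorCross ρ z) + sqrtTaylorError ρ z := by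
  have hz₀ : z ≠ 0 := norm_ne_zero_iff.1 (by rw [hz]; exact one_ne_zero)
  have hconj : (starRingEnd ℂ) z = z⁻¹ := (Complex.inv_eq_conj hz).symm
  rw [sqrtTaylorError, div_eq_iff hP, add_mul (_ + _ + _), div_mul_cancel₀ _ hP]
  simp only [sqrtTaylor, sqrtTaylorCross, map_sub, map_add, map_mul, map_div₀, map_pow, map_one,
    Complex.conj_ofReal, Complex.conj_ofNat, hconj]
  push_cast
  field_simp
  ring

lemma re_le_norm_one_add_mul {z : ℂ} (hρ₀ : 0 ≤ ρ) (hρ₁ : ρ ≤ 1) (hz : ‖z‖ = 1) :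
    (1 + ρ ^ 2 / 4 + ρ ^ 4 / 64) + (2 * sqrtTaylorCross ρ z + sqrtTaylorError ρ z).re ≤
      ‖1 + ρ * z‖ := by
  have hP := sqrtTaylor_ne_zero hρ₀ hρ₁ hz.le
  calc (1 + ρ ^ 2 / 4 + ρ ^ 4 / 64) + (2 * sqrtTaylorCross ρ z + sqrtTaylorError ρ z).re
      = ((1 + ρ * z) * (starRingEnd ℂ) (sqrtTaylor ρ z) / sqrtTaylor ρ z).re := by
        rw [one_add_mul_mul_conj_sqrtTaylor_div hz hP]
        simp only [Complex.add_re, Complex.ofReal_re, Complex.conj_re, two_mul]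
        ring
    _ ≤ ‖(1 + ρ * z) * (starRingEnd ℂ) (sqrtTaylor ρ z) / sqrtTaylor ρ z‖ :=
        Complex.re_le_norm _
    _ = ‖1 + ρ * z‖ := by
        rw [norm_div, norm_mul, RCLike.norm_conj, mul_div_cancel_right₀ _ (norm_ne_zero_iff.2 hP)]

/- The lower bound consists of the first terms of the power series of the left-hand side. -/
lemma le_integral_norm_one_add_mul_expi (hρ₀ : 0 ≤ ρ) (hρ₁ : ρ ≤ 1) :
    1 + ρ ^ 2 / 4 + ρ ^ 4 / 64 ≤ ∫ x, ‖1 + ρ * expi x‖ ∂phaseMeasure := by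
  let g (z : ℂ) : ℂ := 2 * sqrtTaylorCross ρ z + sqrtTaylorError ρ z
  have hg : DiffContOnCl ℂ g (Metric.ball 0 1) := by
    refine .add (Differentiable.diffContOnCl ?_) (diffContOnCl_sqrtTaylorError hρ₀ hρ₁)
    unfold sqrtTaylorCross
    fun_prop
  have hcont : Continuous fun x => g (expi x) := by
    refine hg.continuousOn_ball.comp_continuous continuous_expi fun x => ?_
    rw [mem_closedBall_zero_iff, norm_expi]
  have hzero : ∫ x, (g (expi x)).re ∂phaseMeasure = 0 := by
    calc ∫ x, (g (expi x)).re ∂phaseMeasure = (∫ x, g (expi x) ∂phaseMeasure).re :=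
          integral_re (integrable_of_continuous hcont)
      _ = (g 0).re := by rw [integral_comp_expi hg]
      _ = 0 := by simp [g, sqrtTaylorCross, sqrtTaylorError]
  have hre : Continuous fun x => (g (expi x)).re := Complex.continuous_re.comp hcont
  calc 1 + ρ ^ 2 / 4 + ρ ^ 4 / 64
      = ∫ x, ((1 + ρ ^ 2 / 4 + ρ ^ 4 / 64) + (g (expi x)).re) ∂phaseMeasure := by
        rw [integral_add (integrable_const _) (integrable_of_continuous hre), hzero]
        simp
    _ ≤ ∫ x, ‖1 + ρ * expi x‖ ∂phaseMeasure :=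
        integral_mono (integrable_of_continuous (by fun_prop))
          (integrable_of_continuous (by fun_prop))
          fun x => re_le_norm_one_add_mul hρ₀ hρ₁ (norm_expi x)

lemma le_integral_norm_add_mul_expi {v b : ℂ} (hv : v ≠ 0) (hbv : ‖b‖ ≤ ‖v‖) :
    ‖v‖ * (1 + (‖b‖ / ‖v‖) ^ 2 / 4 + (‖b‖ / ‖v‖) ^ 4 / 64) ≤
      ∫ x, ‖v + b * expi x‖ ∂phaseMeasure := by
  have hv₀ : 0 < ‖v‖ := norm_pos_iff.2 hv
  calc ‖v‖ * (1 + (‖b‖ / ‖v‖) ^ 2 / 4 + (‖b‖ / ‖v‖) ^ 4 / 64)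
      ≤ ‖v‖ * ∫ x, ‖1 + (‖b‖ / ‖v‖ : ℝ) * expi x‖ ∂phaseMeasure := by
        gcongr
        exact le_integral_norm_one_add_mul_expi (by positivity) ((div_le_one hv₀).2 hbv)
    _ = ∫ x, ‖v + b * expi x‖ ∂phaseMeasure := by
        rw [integral_norm_add_mul_expi v b, ← integral_const_mul]
        refine integral_congr_ae (.of_forall fun x => ?_)
        calc ‖v‖ * ‖1 + (‖b‖ / ‖v‖ : ℝ) * expi x‖
            = ‖(‖v‖ : ℂ) * (1 + (‖b‖ / ‖v‖ : ℝ) * expi x)‖ := by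
              rw [norm_mul, Complex.norm_real, norm_norm]
          _ = ‖(‖v‖ + ‖b‖ * expi x : ℂ)‖ := by
              rw [mul_add, mul_one, Complex.ofReal_div, ← mul_assoc,
                mul_div_cancel₀ _ (Complex.ofReal_ne_zero.2 hv₀.ne')]

end OneAddMul

section QuarticMinorant

lemma quarticMinorant_poly_nonneg {r : ℝ} (hr : 1 ≤ r) :
    0 ≤ 0.0066 * r ^ 7 - 0.29 * r ^ 5 + r ^ 4 - 0.98 * r ^ 3 + 0.25 * r ^ 2 + 0.015625 := by
  rcases le_total r 2 with h | h
  · have hr₁ : 0 ≤ r - 1 := sub_nonneg.2 hr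
    have hprod : 0 ≤ (r - 1) * (2 - r) := mul_nonneg hr₁ (sub_nonneg.2 h)
    nlinarith [hprod, mul_nonneg hprod (sq_nonneg r), mul_nonneg hprod (sq_nonneg (r * r)),
      mul_nonneg hprod hr₁, mul_nonneg hprod (mul_nonneg hr₁ (sq_nonneg r)),
      mul_nonneg hr₁ (sq_nonneg (r * (r - 1))), mul_nonneg hr₁ (sq_nonneg (r * r * (r - 1)))]
  · obtain ⟨x, rfl⟩ : ∃ x, r = 2 + x := ⟨r - 2, by ring⟩
    have hx : 0 ≤ x := by linarith
    nlinarith [mul_nonneg hx (sq_nonneg (x ^ 2 - x)), mul_nonneg hx (sq_nonneg (x ^ 2 - 1)),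
      mul_nonneg hx (sq_nonneg (x - 1)), sq_nonneg (x ^ 2 - x), sq_nonneg (x ^ 2 - 1),
      sq_nonneg (x - 1), mul_nonneg hx (sq_nonneg (x ^ 3)), sq_nonneg (x ^ 3),
      sq_nonneg (x ^ 3 - x), mul_nonneg hx (sq_nonneg (x ^ 3 - x)),
      mul_nonneg hx (sq_nonneg (x ^ 2)), sq_nonneg (x ^ 3 - x ^ 2)]

/-- A quartic minorant, in terms of `q = ‖v‖ / ‖b‖`, of `∫ x, ‖v + b * e^{ix}‖ / ‖b‖`; its
integral is controlled by second and fourth moments alone. The coefficients are chosen by hand: the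
quartic has to lie below the mean and to leave enough room in `sqrt_pi_div_two_le_of_half_le_sq`. -/
noncomputable def quarticMinorant (q : ℝ) : ℝ := 0.98 + 0.29 * q ^ 2 - 0.0066 * q ^ 4

lemma quarticMinorant_le {q : ℝ} : quarticMinorant q ≤ 1 + q ^ 2 / 4 + q ^ 4 / 64 := by
  unfold quarticMinorant
  nlinarith [sq_nonneg (q ^ 2 - 0.9)]

lemma quarticMinorant_le_of_one_le {q : ℝ} (hq : 1 ≤ q) :
    quarticMinorant q ≤ q * (1 + q⁻¹ ^ 2 / 4 + q⁻¹ ^ 4 / 64) := by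
  have hpoly := quarticMinorant_poly_nonneg hq
  have hdiff : q * (1 + q⁻¹ ^ 2 / 4 + q⁻¹ ^ 4 / 64) - quarticMinorant q =
      (0.0066 * q ^ 7 - 0.29 * q ^ 5 + q ^ 4 - 0.98 * q ^ 3 + 0.25 * q ^ 2 + 0.015625) /
        q ^ 3 := by
    rw [quarticMinorant]
    field_simp
    ring
  rw [← sub_nonneg, hdiff]
  positivity

lemma mul_quarticMinorant_le_integral_norm_add_mul_expi {b : ℂ} (hb : b ≠ 0) (v : ℂ) :
    ‖b‖ * quarticMinorant (‖v‖ / ‖b‖) ≤ ∫ x, ‖v + b * expi x‖ ∂phaseMeasure := by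
  have hb₀ : 0 < ‖b‖ := norm_pos_iff.2 hb
  rcases le_total ‖v‖ ‖b‖ with h | h
  · rw [integral_norm_add_mul_expi_comm]
    exact (mul_le_mul_of_nonneg_left quarticMinorant_le hb₀.le).trans
      (le_integral_norm_add_mul_expi hb h)
  · have hv : v ≠ 0 := norm_pos_iff.1 (hb₀.trans_le h)
    refine le_trans ?_ (le_integral_norm_add_mul_expi hv h)
    calc ‖b‖ * quarticMinorant (‖v‖ / ‖b‖)
        ≤ ‖b‖ * (‖v‖ / ‖b‖ * (1 + (‖v‖ / ‖b‖)⁻¹ ^ 2 / 4 + (‖v‖ / ‖b‖)⁻¹ ^ 4 / 64)) := by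
          gcongr
          exact quarticMinorant_le_of_one_le ((one_le_div hb₀).2 h)
      _ = ‖v‖ * (1 + (‖b‖ / ‖v‖) ^ 2 / 4 + (‖b‖ / ‖v‖) ^ 4 / 64) := by
          rw [inv_div, ← mul_assoc, mul_div_cancel₀ _ hb₀.ne']

lemma sqrt_pi_div_two_le_of_half_le_sq {A : ℝ} (hA₀ : 0 ≤ A) (hA : 1 / 2 ≤ A ^ 2) :
    √π / 2 ≤ A * (0.98 + 0.29 * ((1 - A ^ 2) / A ^ 2) -
      0.0066 * (2 * (1 - A ^ 2) ^ 2 / A ^ 4)) := by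
  have hA₁ : 0.7 ≤ A := by nlinarith
  have hpi : √π ≤ 1.77246 := by
    rw [Real.sqrt_le_left (by norm_num)]
    linarith [pi_lt_d6]
  have hpoly : 0 ≤ 0.6768 * A ^ 4 - 0.88623 * A ^ 3 + 0.3164 * A ^ 2 - 0.0132 := by
    obtain ⟨t, ht, rfl⟩ : ∃ t, 0 ≤ t ∧ A = t + 0.7 := ⟨A - 0.7, by linarith, by ring⟩
    ring_nf
    positivity
  have hdiff : A * (0.98 + 0.29 * ((1 - A ^ 2) / A ^ 2) -
      0.0066 * (2 * (1 - A ^ 2) ^ 2 / A ^ 4)) - 0.88623 =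
      (0.6768 * A ^ 4 - 0.88623 * A ^ 3 + 0.3164 * A ^ 2 - 0.0132) / A ^ 3 := by
    field_simp
    ring
  linarith [div_nonneg hpoly (pow_nonneg hA₀ 3)]

end QuarticMinorant

section FirstMoment

variable {ι : Type*} [Fintype ι] {s : Finset ι} {a : ι → ℂ}

lemma le_integral_quarticMinorant {A : ℝ} :
    0.98 + 0.29 * ((∑ j ∈ s, ‖a j‖ ^ 2) / A ^ 2) -
        0.0066 * (2 * (∑ j ∈ s, ‖a j‖ ^ 2) ^ 2 / A ^ 4) ≤
      ∫ ω, quarticMinorant (‖steinhausSum s a ω‖ / A) ∂(steinhausMeasure ι) := by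
  simp only [quarticMinorant, div_pow]
  rw [integral_sub (integrable_of_continuous (by fun_prop))
      (integrable_of_continuous (by fun_prop)),
    integral_add (integrable_const _) (integrable_of_continuous (by fun_prop)),
    integral_const_mul, integral_const_mul, integral_div, integral_div,
    integral_norm_steinhausSum_sq, integral_const, probReal_univ, one_smul]
  gcongr
  exact integral_norm_steinhausSum_pow_four_le s a

lemma integral_mul_quarticMinorant_le_integral_norm_steinhausSum [DecidableEq ι] {j : ι}
    (hj : j ∉ s) (ha : a j ≠ 0) :
    ‖a j‖ * ∫ ω, quarticMinorant (‖steinhausSum s a ω‖ / ‖a j‖) ∂(steinhausMeasure ι) ≤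
      ∫ ω, ‖steinhausSum (insert j s) a ω‖ ∂(steinhausMeasure ι) := by
  rw [integral_steinhausSum_insert hj a continuous_norm, ← integral_const_mul]
  refine integral_mono (integrable_of_continuous ?_) (integrable_of_continuous ?_)
    fun ω => mul_quarticMinorant_le_integral_norm_add_mul_expi ha _
  · unfold quarticMinorant
    fun_prop
  · simpa using continuous_parametric_integral_of_continuous (μ := phaseMeasure) (s := Set.univ)
      (f := fun ω x => ‖steinhausSum s a ω + a j * expi x‖)
      (by unfold Function.uncurry; fun_prop) isCompact_univ

lemma sqrt_pi_div_two_le_integral_norm_of_half_le_sq {j : ι} (hj : j ∈ s)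
    (ha : ∑ i ∈ s, ‖a i‖ ^ 2 = 1) (hlarge : 1 / 2 ≤ ‖a j‖ ^ 2) :
    √π / 2 ≤ ∫ ω, ‖steinhausSum s a ω‖ ∂(steinhausMeasure ι) := by
  classical
  have haj : a j ≠ 0 := by
    rintro h
    norm_num [h] at hlarge
  have hsum : ∑ i ∈ s.erase j, ‖a i‖ ^ 2 = 1 - ‖a j‖ ^ 2 := by
    rw [← ha, ← Finset.add_sum_erase _ _ hj]
    ring
  calc √π / 2 ≤ ‖a j‖ * (0.98 + 0.29 * ((1 - ‖a j‖ ^ 2) / ‖a j‖ ^ 2) -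
          0.0066 * (2 * (1 - ‖a j‖ ^ 2) ^ 2 / ‖a j‖ ^ 4)) :=
        sqrt_pi_div_two_le_of_half_le_sq (norm_nonneg _) hlarge
    _ ≤ ‖a j‖ * ∫ ω, quarticMinorant (‖steinhausSum (s.erase j) a ω‖ / ‖a j‖)
          ∂(steinhausMeasure ι) := by
        rw [← hsum]
        gcongr
        exact le_integral_quarticMinorant
    _ ≤ ∫ ω, ‖steinhausSum s a ω‖ ∂(steinhausMeasure ι) := by
        nth_rw 2 [← Finset.insert_erase hj]
        exact integral_mul_quarticMinorant_le_integral_norm_steinhausSum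
          (Finset.notMem_erase j s) haj

theorem sqrt_pi_div_two_le_integral_norm_steinhausSum (ha : ∑ j ∈ s, ‖a j‖ ^ 2 = 1) :
    √π / 2 ≤ ∫ ω, ‖steinhausSum s a ω‖ ∂(steinhausMeasure ι) := by
  by_cases h : ∀ j ∈ s, ‖a j‖ ^ 2 ≤ 1 / 2
  · exact sqrt_pi_div_two_le_integral_norm_of_forall_sq_le ha h
  · push Not at h
    obtain ⟨j, hj, hlarge⟩ := h
    exact sqrt_pi_div_two_le_integral_norm_of_half_le_sq hj ha hlarge.le

end FirstMoment

lemma steinhausSum_div {ι : Type*} (s : Finset ι) (a : ι → ℂ) (c : ℂ) (ω : ι → Phase) :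
    steinhausSum s (fun j => a j / c) ω = steinhausSum s a ω / c := by
  simp only [steinhausSum, Finset.sum_div, div_mul_eq_mul_div]

lemma SteinhausKhinchineBound.of_normalized {p K : ℝ} (hp : 0 < p) (hK : 0 ≤ K)
    (h : ∀ (N : ℕ) (a : Fin N → ℂ), ∑ j, ‖a j‖ ^ 2 = 1 →
      1 ≤ K ^ p * ∫ ω, ‖steinhausSum Finset.univ a ω‖ ^ p ∂(steinhausMeasure (Fin N))) :
    SteinhausKhinchineBound p K := by
  intro N a
  have : 0 ≤ ∫ ω, ‖steinhausSum Finset.univ a ω‖ ^ p ∂(steinhausMeasure (Fin N)) :=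
    integral_nonneg fun ω => by positivity
  rcases (show 0 ≤ ∑ j, ‖a j‖ ^ 2 by positivity).eq_or_lt with hzero | hpos
  · rw [← hzero, zero_rpow (by positivity)]
    positivity
  set S := √(∑ j, ‖a j‖ ^ 2)
  have hS : 0 < S := Real.sqrt_pos.2 hpos
  have hS₂ : S ^ 2 = ∑ j, ‖a j‖ ^ 2 := Real.sq_sqrt hpos.le
  have hnormS : ‖(S : ℂ)‖ = S := by rw [Complex.norm_real, norm_of_nonneg hS.le]
  have hnormalized := h N (fun j => a j / S) (by
    simp only [norm_div, hnormS, div_pow]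
    rw [← Finset.sum_div, hS₂, div_self hpos.ne'])
  simp only [steinhausSum_div, norm_div, hnormS, div_rpow (norm_nonneg _) hS.le] at hnormalized
  rw [integral_div, ← mul_div_assoc, one_le_div (by positivity)] at hnormalized
  calc (∑ j, ‖a j‖ ^ 2) ^ (p / 2) = S ^ p := by
        rw [← hS₂, ← rpow_natCast, ← rpow_mul hS.le]
        congr 1
        push_cast
        ring
    _ ≤ K ^ p * ∫ ω, ‖steinhausSum Finset.univ a ω‖ ^ p ∂(steinhausMeasure (Fin N)) := hnormalized

theorem steinhausKhinchineBound_one : SteinhausKhinchineBound 1 (2 / √π) := by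
  refine .of_normalized one_pos (by positivity) fun N a ha => ?_
  simp only [rpow_one]
  rw [← div_le_iff₀' (by positivity), one_div_div]
  exact sqrt_pi_div_two_le_integral_norm_steinhausSum ha

/-! ### Steinhaus sums in `L^p` for `p` close to `2` -/

section ThirdMoment

variable {ι : Type*} [Fintype ι] {s : Finset ι} {a : ι → ℂ}

lemma integral_norm_steinhausSum_pow_three_le (ha : ∑ j ∈ s, ‖a j‖ ^ 2 = 1) :
    ∫ ω, ‖steinhausSum s a ω‖ ^ 3 ∂(steinhausMeasure ι) ≤ 1.35 := by
  have hone := sqrt_pi_div_two_le_integral_norm_steinhausSum ha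
  have htwo := integral_norm_steinhausSum_sq s a
  have hfour := integral_norm_steinhausSum_pow_four_le s a
  rw [ha] at htwo hfour
  have hpi : 1.7724 ≤ √π := le_sqrt_of_sq_le (by linarith [pi_gt_d6])
  -- The squared quadratic nearly vanishes where most of the mass of the complex Gaussian lies.
  have hpoint (r : ℝ) : 4.4 * r ^ 3 ≤ r ^ 4 + 6.74 * r ^ 2 - 4.18 * r + 0.9025 := by
    linarith [sq_nonneg (r ^ 2 - 2.2 * r + 0.95)]
  have hmean : ∫ ω, 4.4 * ‖steinhausSum s a ω‖ ^ 3 ∂(steinhausMeasure ι) ≤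
      ∫ ω, (‖steinhausSum s a ω‖ ^ 4 + 6.74 * ‖steinhausSum s a ω‖ ^ 2 -
        4.18 * ‖steinhausSum s a ω‖ + 0.9025) ∂(steinhausMeasure ι) :=
    integral_mono (integrable_of_continuous (by fun_prop)) (integrable_of_continuous (by fun_prop))
      fun ω => hpoint _
  rw [integral_add (integrable_of_continuous (by fun_prop)) (integrable_const _),
    integral_sub (integrable_of_continuous (by fun_prop)) (integrable_of_continuous (by fun_prop)),
    integral_add (integrable_of_continuous (by fun_prop)) (integrable_of_continuous (by fun_prop)),
    integral_const_mul, integral_const_mul, integral_const_mul, integral_const, probReal_univ,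
    one_smul, htwo] at hmean
  linarith

lemma sq_sub_le_rpow_mul_rpow_two_sub {c r p : ℝ} (hc : 0 < c) (hr : 0 ≤ r) (hp₀ : 0 ≤ p)
    (hp₂ : p < 2) : (1 + p) * r ^ 2 - p / c * r ^ 3 ≤ c ^ p * r ^ (2 - p) := by
  rcases hr.eq_or_lt with rfl | hr
  · simp [zero_rpow (sub_pos.2 hp₂).ne']
  · have hlog : 1 - r / c ≤ log (c / r) := by
      have := one_sub_inv_le_log_of_pos (div_pos hc hr)
      rwa [inv_div] at this
    calc (1 + p) * r ^ 2 - p / c * r ^ 3 = r ^ 2 * (p * (1 - r / c) + 1) := by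
          field_simp
          ring
      _ ≤ r ^ 2 * exp (p * log (c / r)) := by
          gcongr
          exact (add_le_add_left (mul_le_mul_of_nonneg_left hlog hp₀) 1).trans (add_one_le_exp _)
      _ = c ^ p * r ^ (2 - p) := by
          rw [mul_comm p, ← rpow_def_of_pos (div_pos hc hr), div_rpow hc.le hr.le, rpow_sub hr,
            rpow_ofNat]
          ring

/- Hölder's inequality between the exponents `2 - p`, `2` and `3`. -/
lemma one_le_rpow_mul_integral_norm_steinhausSum_rpow (ha : ∑ j ∈ s, ‖a j‖ ^ 2 = 1) {p : ℝ}
    (hp₀ : 0 ≤ p) (hp₂ : p < 2) :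
    1 ≤ 1.35 ^ p * ∫ ω, ‖steinhausSum s a ω‖ ^ (2 - p) ∂(steinhausMeasure ι) := by
  have hcont : Continuous fun ω => ‖steinhausSum s a ω‖ ^ (2 - p) :=
    Continuous.rpow_const (by fun_prop) fun ω => .inr (sub_pos.2 hp₂).le
  calc (1 : ℝ) ≤ (1 + p) * 1 - p / 1.35 *
          ∫ ω, ‖steinhausSum s a ω‖ ^ 3 ∂(steinhausMeasure ι) := by
        have := mul_le_mul_of_nonneg_left (integral_norm_steinhausSum_pow_three_le ha)
          (show 0 ≤ p / 1.35 by positivity)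
        rw [div_mul_cancel₀ p (by norm_num)] at this
        linarith
    _ = ∫ ω, ((1 + p) * ‖steinhausSum s a ω‖ ^ 2 - p / 1.35 * ‖steinhausSum s a ω‖ ^ 3)
          ∂(steinhausMeasure ι) := by
        rw [integral_sub (integrable_of_continuous (by fun_prop))
          (integrable_of_continuous (by fun_prop)), integral_const_mul, integral_const_mul,
          integral_norm_steinhausSum_sq, ha]
    _ ≤ ∫ ω, 1.35 ^ p * ‖steinhausSum s a ω‖ ^ (2 - p) ∂(steinhausMeasure ι) :=
        integral_mono (integrable_of_continuous (by fun_prop))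
          (integrable_of_continuous (by fun_prop)) fun ω =>
            sq_sub_le_rpow_mul_rpow_two_sub (by norm_num) (norm_nonneg _) hp₀ hp₂
    _ = 1.35 ^ p * ∫ ω, ‖steinhausSum s a ω‖ ^ (2 - p) ∂(steinhausMeasure ι) :=
        integral_const_mul _ _

end ThirdMoment

lemma rpow_inv_le_div_sub_one_rpow {c d k : ℝ} (hc : 1 ≤ c) (hd : log c ≤ d) (hk : 1 < k) :
    c ^ k⁻¹ ≤ (k / (k - 1)) ^ d := by
  have hk₀ : 0 < k := one_pos.trans hk
  have hquot : 0 < k / (k - 1) := div_pos hk₀ (sub_pos.2 hk)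
  have hlog : k⁻¹ ≤ log (k / (k - 1)) := by
    have := one_sub_inv_le_log_of_pos hquot
    rwa [inv_div, sub_div, div_self hk₀.ne', sub_sub_cancel, one_div] at this
  rw [rpow_def_of_pos (one_pos.trans_le hc), rpow_def_of_pos hquot, mul_comm (log (k / (k - 1)))]
  have hd₀ : 0 ≤ d := (log_nonneg hc).trans hd
  gcongr

lemma steinhausKhinchineBound_two_mul_div {d k : ℝ} (hd : log 1.35 ≤ d) (hk : 1 < k) :
    SteinhausKhinchineBound (2 * k / (k + 1)) ((k / (k - 1)) ^ d) := by
  have hk₀ : 0 < k := one_pos.trans hk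
  have : 0 ≤ k / (k - 1) := div_nonneg hk₀.le (sub_pos.2 hk).le
  refine .of_normalized (by positivity) (by positivity) fun N a ha => ?_
  have hexp : 2 * k / (k + 1) = 2 - 2 / (k + 1) := by
    field_simp
    ring
  calc (1 : ℝ) ≤ 1.35 ^ (2 / (k + 1)) *
          ∫ ω, ‖steinhausSum Finset.univ a ω‖ ^ (2 - 2 / (k + 1)) ∂(steinhausMeasure (Fin N)) :=
        one_le_rpow_mul_integral_norm_steinhausSum_rpow ha (by positivity)
          ((div_lt_iff₀ (by positivity)).2 (by linarith))
    _ = (1.35 ^ k⁻¹) ^ (2 * k / (k + 1)) *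
          ∫ ω, ‖steinhausSum Finset.univ a ω‖ ^ (2 * k / (k + 1)) ∂(steinhausMeasure (Fin N)) := by
        rw [← hexp, ← rpow_mul (by norm_num)]
        congr 2
        field_simp
    _ ≤ ((k / (k - 1)) ^ d) ^ (2 * k / (k + 1)) *
          ∫ ω, ‖steinhausSum Finset.univ a ω‖ ^ (2 * k / (k + 1)) ∂(steinhausMeasure (Fin N)) := by
        have : 0 ≤ ∫ ω, ‖steinhausSum Finset.univ a ω‖ ^ (2 * k / (k + 1))
            ∂(steinhausMeasure (Fin N)) := integral_nonneg fun ω => by positivity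
        gcongr
        exact rpow_inv_le_div_sub_one_rpow (by norm_num) hd hk

/-! ### The Bohnenblust--Hille inequality -/

theorem bohnenblustHilleBound_of_log_le {d : ℝ} (hd : log 1.35 ≤ d) {n : ℕ} (hn : 2 ≤ n) :
    BohnenblustHilleBound n (2 / √π * ((n : ℝ) - 1) ^ d) := by
  induction n, hn using Nat.le_induction with
  | base =>
    have hKh : SteinhausKhinchineBound (2 * (1 : ℕ) / ((1 : ℕ) + 1)) (2 / √π) := by
      convert steinhausKhinchineBound_one
      norm_num
    have := bohnenblustHilleBound_one.succ le_rfl zero_le_one (by positivity) hKh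
    norm_num at this ⊢
    exact this
  | succ n hn ih =>
    have hn₁ : (1 : ℝ) < n := by exact_mod_cast hn
    have hsub : 0 < (n : ℝ) - 1 := sub_pos.2 hn₁
    have hstep := ih.succ (one_le_two.trans hn) (by positivity) (by positivity)
      (steinhausKhinchineBound_two_mul_div hd hn₁)
    convert hstep using 1
    have hpow : ((n : ℝ) - 1) ^ d ≠ 0 := (rpow_pos_of_pos hsub d).ne'
    rw [Nat.cast_add_one, add_sub_cancel_right, div_rpow (by positivity) hsub.le]
    field_simp

lemma sum_apply_single_mul_prod {n N : ℕ}
    (U : ContinuousMultilinearMap ℂ (fun _ : Fin n => (Fin N → ℂ)) ℂ) (z : Fin n → Fin N → ℂ) :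
    ∑ i : Fin n → Fin N, U (fun k => Pi.single (i k) (1 : ℂ)) * ∏ k, z k (i k) = U z := by
  have hz : z = fun k => ∑ j, z k j • (Pi.single j (1 : ℂ) : Fin N → ℂ) :=
    funext fun k => pi_eq_sum_univ' (z k)
  conv_rhs => rw [hz, ContinuousMultilinearMap.map_sum]
  refine Finset.sum_congr rfl fun i _ => ?_
  rw [U.map_smul_univ (fun k => z k (i k)), smul_eq_mul, mul_comm]

lemma BohnenblustHilleBound.BHcomplex_le {n : ℕ} {C : ℝ} (h : BohnenblustHilleBound n C)
    (hn : n ≠ 0) (hC : 0 ≤ C) {N : ℕ}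
    (U : ContinuousMultilinearMap ℂ (fun _ : Fin n => (Fin N → ℂ)) ℂ) :
    BHcomplex n N U ≤ C * ‖U‖ := by
  have hbound (z : Fin n → Fin N → ℂ) (hz : ∀ k j, ‖z k j‖ ≤ 1) :
      ‖∑ i : Fin n → Fin N, U (fun k => Pi.single (i k) (1 : ℂ)) * ∏ k, z k (i k)‖ ≤ ‖U‖ := by
    rw [sum_apply_single_mul_prod]
    refine (U.le_opNorm z).trans (mul_le_of_le_one_right (norm_nonneg U) ?_)
    exact Finset.prod_le_one (fun k _ => norm_nonneg _) fun k _ =>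
      (pi_norm_le_iff_of_nonneg zero_le_one).2 (hz k)
  rw [BHcomplex, ← inv_div (2 * n : ℝ),
    rpow_inv_le_iff_of_pos (by positivity) (by positivity) (by positivity)]
  exact h N _ ‖U‖ hbound

lemma log_one_point_three_five_le : log 1.35 ≤ 0.3002 := by
  rw [log_le_iff_le_exp (by norm_num)]
  refine le_trans ?_ (sum_le_exp_of_nonneg (by norm_num) 5)
  norm_num [Finset.sum_range_succ, Nat.factorial]

lemma eulerMascheroniConstant_lt : eulerMascheroniConstant < 0.5838 := by
  have hseq := eulerMascheroniConstant_lt_eulerMascheroniSeq' 128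
  have hlog : log (128 : ℕ) = 7 * log 2 := by
    rw [← log_rpow two_pos]
    norm_num
  have hharm : (harmonic 128 : ℝ) ≤ 5.4332 := by
    have : harmonic 128 ≤ 54332 / 10000 := by
      norm_num [harmonic, Finset.sum_range_succ]
    have : (harmonic 128 : ℝ) ≤ ((54332 / 10000 : ℚ) : ℝ) := by exact_mod_cast this
    exact this.trans (by norm_num)
  rw [eulerMascheroniSeq', if_neg (by norm_num), hlog] at hseq
  linarith [log_two_gt_d9]

lemma log_le_logb_two_exp :
    log 1.35 ≤ logb 2 (exp ((1 - eulerMascheroniConstant) / 2)) := by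
  rw [logb, log_exp, le_div_iff₀ (log_pos one_lt_two)]
  nlinarith [log_one_point_three_five_le, eulerMascheroniConstant_lt, log_two_lt_d9,
    log_pos one_lt_two]

theorem stmt3_general (n : ℕ) (hn : 2 ≤ n) (N : ℕ)
    (U : ContinuousMultilinearMap ℂ (fun _ : Fin n => (Fin N → ℂ)) ℂ)
    (d : ℝ) (hd : Real.log 1.35 ≤ d) :
    BHcomplex n N U ≤ 2 / Real.sqrt π * ((n : ℝ) - 1) ^ d * ‖U‖ := by
  have hn₁ : (0 : ℝ) ≤ (n : ℝ) - 1 := sub_nonneg.2 (by exact_mod_cast one_le_two.trans hn)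
  exact (bohnenblustHilleBound_of_log_le hd hn).BHcomplex_le (by omega) (by positivity) U

theorem stmt3 (n : ℕ) (hn : 2 ≤ n) (N : ℕ) (hN : 0 < N)
    (U : ContinuousMultilinearMap ℂ (fun _ : Fin n => (Fin N → ℂ)) ℂ)
    (D : ℝ) (hD : D = Real.exp ((1 - Real.eulerMascheroniConstant) / 2)) :
    BHcomplex n N U ≤ 2 / Real.sqrt π * ((n : ℝ) - 1) ^ Real.logb 2 D * ‖U‖ :=
  stmt3_general n hn N U _ (hD ▸ log_le_logb_two_exp)
end
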